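/- arXiv:math/0103172 — 5 statements merged into one kernel-verified Lean document; each statement's English description precedes it below -/
import Mathlib

section
/- Let m ≥ 1 and σ₀ > 0. Let φ be a fixed positive Schwartz function on ℝ with ∫φ(λ)dλ = 1 whose Fourier transform φ̂ vanishes outside [−1,1], and for 0 < σ ≤ σ₀ set φ_σ(λ) = σ⁻¹φ(λ/σ). Suppose μ : ℝ → ℝ is a nondecreasing function of at most polynomial growth with μ(0) = 0, and ν : ℝ → ℝ is a function of locally bounded variation with ν(0) = 0 whose total variation measure satisfies |dν(λ)| ≤ (A₀(1+|λ|)^m + A₁(1+|λ|)^{m−1})dλ. If the convolution of the (signed) Stieltjes measure dμ − dν with φ_σ satisfies |((dμ − dν) ∗ φ_σ)(λ)| ≤ B(1+|λ|)^{−2} for all λ ∈ ℝ, then |μ(λ) − ν(λ)| ≤ C_m(A₀σ(1+|λ|)^m + A₁σ(1+|λ|)^{m−1} + B) for all λ ∈ ℝ, where the constant C_m depends only on m, σ₀ and φ. -/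
/-!
Write `w(t) = A₀(1+|t|)^m + A₁(1+|t|)^{m-1}` and let `R(x) = (1+|x|)^{-r}` with `r = m + 2`.

For a temperate measure `M`, Fubini's theorem turns the primitive of `M ∗ φ_σ` over `[0, l]` into
the integral against `dM(t)` of `Ψ((l-t)/σ) - Ψ(-t/σ)`, where `Ψ` is the primitive of `φ`. As `Ψ`
differs from the Heaviside function by `O(R)` (Chebyshev), the primitive differs from the increment
of `M` between `0` and `l` by a constant times `E_M(l) + E_M(0)`, where
`E_M(x) = ∫ R((x-t)/σ) dM(t)`; see `TemperateMeasure.primitive_sub_le`. Applied to `dμ`, `dν⁺`,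
`dν⁻`, and since the primitive of `(dμ - dν) ∗ φ_σ` is `O(B)` because `(1+|s|)^{-2}` is integrable,
this reduces the claim to bounding the tail integrals `E_M`.

* For `|dν| ≤ w dt` one substitutes `t = x - σy` and uses that `w` varies slowly on the scale `σ`:
  `E ≤ C σ w(x)` (`lintegral_weight_le`).
* For `dμ`, positivity of `φ` gives `R ≤ C (R ∗ φ)` (`exists_kernel_le_conv`), so by Tonelli `E_μ` is
  dominated by an `R`-average of `σ (dμ ∗ φ_σ)(x - σy)` (`lintegral_kernel_le`), and the hypothesis
  bounds `dμ ∗ φ_σ` by `|dν| ∗ φ_σ + B = O(w + B)`.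

The tail estimates are carried out with `[0, ∞]`-valued integrals, so that finiteness of `E_M` is a
consequence and not a precondition. Polynomial growth of `μ` enters only through integrability of
`φ_σ(l - ·)` with respect to `dμ`.
-/

open MeasureTheory Set Filter
open scoped FourierTransform

/-! ### The weight bounding the variation of `ν` -/

/-- The density bounding the total variation of `ν`. -/
noncomputable def tauberWeight (m A₀ A₁ t : ℝ) : ℝ :=
  A₀ * (1 + |t|) ^ m + A₁ * (1 + |t|) ^ (m - 1)

lemma tauberWeight_nonneg {m A₀ A₁ : ℝ} (h₀ : 0 ≤ A₀) (h₁ : 0 ≤ A₁) (t : ℝ) :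
    0 ≤ tauberWeight m A₀ A₁ t := by
  unfold tauberWeight; positivity

lemma tauberWeight_measurable (m A₀ A₁ : ℝ) : Measurable (tauberWeight m A₀ A₁) := by
  unfold tauberWeight; fun_prop

lemma tauberWeight_zero_le {m A₀ A₁ : ℝ} (hm : 1 ≤ m) (h₀ : 0 ≤ A₀) (h₁ : 0 ≤ A₁) (l : ℝ) :
    tauberWeight m A₀ A₁ 0 ≤ tauberWeight m A₀ A₁ l := by
  unfold tauberWeight
  have h : (1 : ℝ) + |0| ≤ 1 + |l| := by simp
  gcongr

/-- The weight varies slowly on the scale `σ ≤ σ₀`. -/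
lemma tauberWeight_shift {m A₀ A₁ σ σ₀ : ℝ} (hm : 1 ≤ m) (h₀ : 0 ≤ A₀) (h₁ : 0 ≤ A₁)
    (hσ : 0 < σ) (hσσ : σ ≤ σ₀) (l y : ℝ) :
    tauberWeight m A₀ A₁ (l - σ * y)
      ≤ (1 + σ₀) ^ m * (1 + |y|) ^ m * tauberWeight m A₀ A₁ l := by
  have hσ₀ : 0 < σ₀ := hσ.trans_le hσσ
  set X : ℝ := (1 + σ₀) * (1 + |y|) with hX
  have hX1 : 1 ≤ X := by
    have := abs_nonneg y
    rw [hX]; nlinarith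
  have key : 1 + |l - σ * y| ≤ X * (1 + |l|) := by
    have h1 : |l - σ * y| ≤ |l| + σ * |y| := by
      calc |l - σ * y| ≤ |l| + |σ * y| := abs_sub _ _
        _ = _ := by rw [abs_mul, abs_of_pos hσ]
    have h2 : σ * |y| ≤ σ₀ * |y| := by gcongr
    have hy := abs_nonneg y
    have hl := abs_nonneg l
    have : 0 ≤ σ₀ * |y| := by positivity
    have h3 : 1 + σ₀ * |y| ≤ X := by rw [hX]; nlinarith
    nlinarith
  have hXm : (1 + σ₀) ^ m * (1 + |y|) ^ m = X ^ m := by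
    rw [hX, Real.mul_rpow (by positivity) (by positivity)]
  have e1 : (1 + |l - σ * y|) ^ m ≤ X ^ m * (1 + |l|) ^ m := by
    rw [← Real.mul_rpow (by positivity) (by positivity)]
    gcongr
  have e2 : (1 + |l - σ * y|) ^ (m - 1) ≤ X ^ m * (1 + |l|) ^ (m - 1) := by
    calc (1 + |l - σ * y|) ^ (m - 1) ≤ (X * (1 + |l|)) ^ (m - 1) := by
          apply Real.rpow_le_rpow (by positivity) key (by linarith)
      _ = X ^ (m - 1) * (1 + |l|) ^ (m - 1) := Real.mul_rpow (by positivity) (by positivity)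
      _ ≤ _ := by gcongr; linarith
  rw [hXm]
  unfold tauberWeight
  calc _ ≤ A₀ * (X ^ m * (1 + |l|) ^ m) + A₁ * (X ^ m * (1 + |l|) ^ (m - 1)) := by gcongr
    _ = _ := by ring

/-- The substitution `t = l - σ y`; no integrability is needed for the Lebesgue integral. -/
lemma lintegral_comp_affine {f : ℝ → ENNReal} (hf : Measurable f) {σ : ℝ} (hσ : 0 < σ) (l : ℝ) :
    ∫⁻ t, f t = ENNReal.ofReal σ * ∫⁻ y, f (l - σ * y) := by
  have h1 : ∫⁻ y, f (l - σ * y) = ∫⁻ y, (fun z => f (l - z)) y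
      ∂(Measure.map (σ * ·) volume) := by
    rw [lintegral_map (by fun_prop) (by fun_prop)]
  rw [h1, Real.map_volume_mul_left hσ.ne', lintegral_smul_measure, smul_eq_mul,
    ← mul_assoc, ← ENNReal.ofReal_mul hσ.le, abs_of_pos (inv_pos.2 hσ), mul_inv_cancel₀ hσ.ne',
    ENNReal.ofReal_one, one_mul]
  exact (lintegral_sub_left_eq_self f l).symm

/-- Rescaled integrals against a measure dominated by the weight have size `σ · weight`. -/
lemma lintegral_weight_le {m A₀ A₁ σ σ₀ : ℝ} (hm : 1 ≤ m) (h₀ : 0 ≤ A₀) (h₁ : 0 ≤ A₁)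
    (hσ : 0 < σ) (hσσ : σ ≤ σ₀) {M : Measure ℝ}
    (hM : M ≤ volume.withDensity fun t => ENNReal.ofReal (tauberWeight m A₀ A₁ t))
    {f : ℝ → ENNReal} (hf : Measurable f) (l : ℝ) :
    ∫⁻ t, f ((l - t) / σ) ∂M ≤ ENNReal.ofReal (σ * tauberWeight m A₀ A₁ l) *
      ∫⁻ y, f y * ENNReal.ofReal ((1 + σ₀) ^ m * (1 + |y|) ^ m) := by
  have hw := tauberWeight_measurable m A₀ A₁
  have hwl := tauberWeight_nonneg (m := m) h₀ h₁ l
  have hσ₀ : 0 < σ₀ := hσ.trans_le hσσ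
  calc ∫⁻ t, f ((l - t) / σ) ∂M
      ≤ ∫⁻ t, f ((l - t) / σ) ∂(volume.withDensity fun t =>
          ENNReal.ofReal (tauberWeight m A₀ A₁ t)) := lintegral_mono' hM le_rfl
    _ = ∫⁻ t, ENNReal.ofReal (tauberWeight m A₀ A₁ t) * f ((l - t) / σ) := by
        rw [lintegral_withDensity_eq_lintegral_mul _ (by fun_prop) (by fun_prop)]
        rfl
    _ = ENNReal.ofReal σ * ∫⁻ y, ENNReal.ofReal (tauberWeight m A₀ A₁ (l - σ * y)) * f y := by
        rw [lintegral_comp_affine (by fun_prop) hσ l]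
        congr 2 with y
        congr 2
        field_simp
        ring
    _ ≤ ENNReal.ofReal σ * ∫⁻ y, ENNReal.ofReal (tauberWeight m A₀ A₁ l) *
          (f y * ENNReal.ofReal ((1 + σ₀) ^ m * (1 + |y|) ^ m)) := by
        refine mul_le_mul' le_rfl (lintegral_mono fun y => ?_)
        rw [mul_left_comm, ← ENNReal.ofReal_mul hwl, mul_comm]
        gcongr
        rw [mul_comm (tauberWeight _ _ _ _)]
        exact tauberWeight_shift hm h₀ h₁ hσ hσσ l y
    _ = _ := by
        rw [lintegral_const_mul _ (by fun_prop), ← mul_assoc, ← ENNReal.ofReal_mul hσ.le]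

/-! ### Temperate measures -/

/-- Temperate growth of a measure, expressed by a Lebesgue integral: `(1+|t|)^{-k}` has finite integral
for some `k`. -/
def TemperateMeasure (M : Measure ℝ) : Prop :=
  ∃ k : ℕ, ∫⁻ t, ENNReal.ofReal (((1 + |t|) ^ k)⁻¹) ∂M ≠ ⊤

lemma lintegral_inv_sq_ne_top : ∫⁻ t : ℝ, ENNReal.ofReal (((1 + |t|) ^ 2)⁻¹) ≠ ⊤ := by
  have h := finite_integral_one_add_norm (E := ℝ) (μ := volume) (r := 2) (by simp)
  refine ne_of_lt (lt_of_le_of_lt (le_of_eq ?_) h)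
  congr 1 with t
  rw [Real.rpow_neg (by positivity), Real.norm_eq_abs]
  norm_num

lemma TemperateMeasure.mono {M N : Measure ℝ} (h : M ≤ N) (hN : TemperateMeasure N) :
    TemperateMeasure M := by
  obtain ⟨k, hk⟩ := hN
  exact ⟨k, ne_top_of_le_ne_top hk (lintegral_mono' h le_rfl)⟩

lemma temperateMeasure_weight {m A₀ A₁ : ℝ} (h₀ : 0 ≤ A₀) (h₁ : 0 ≤ A₁) :
    TemperateMeasure
      (volume.withDensity fun t => ENNReal.ofReal (tauberWeight m A₀ A₁ t)) := by
  have hw := tauberWeight_measurable m A₀ A₁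
  obtain ⟨k, hk⟩ := exists_nat_ge m
  refine ⟨k + 2, ?_⟩
  rw [lintegral_withDensity_eq_lintegral_mul _ (by fun_prop) (by fun_prop)]
  refine ne_top_of_le_ne_top
    (ENNReal.mul_ne_top (ENNReal.ofReal_ne_top (r := A₀ + A₁)) lintegral_inv_sq_ne_top) ?_
  rw [← lintegral_const_mul _ (by fun_prop)]
  refine lintegral_mono fun t => ?_
  simp only [Pi.mul_apply]
  rw [← ENNReal.ofReal_mul (tauberWeight_nonneg h₀ h₁ t), ← ENNReal.ofReal_mul (by positivity)]
  apply ENNReal.ofReal_le_ofReal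
  have hb : (1 : ℝ) ≤ 1 + |t| := by simp
  have : tauberWeight m A₀ A₁ t ≤ (A₀ + A₁) * (1 + |t|) ^ k := by
    unfold tauberWeight
    have e1 : (1 + |t|) ^ m ≤ (1 + |t|) ^ k := by
      rw [← Real.rpow_natCast]; gcongr; 
    have e2 : (1 + |t|) ^ (m - 1) ≤ (1 + |t|) ^ k := by
      rw [← Real.rpow_natCast]; gcongr; linarith
    rw [add_mul]; gcongr
  calc _ ≤ (A₀ + A₁) * (1 + |t|) ^ k * ((1 + |t|) ^ (k + 2))⁻¹ := by gcongr
    _ = _ := by rw [pow_add]; field_simp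

lemma temperateMeasure_stieltjes {μ : ℝ → ℝ} {M : Measure ℝ}
    (hμ : ∃ C' N : ℝ, ∀ l : ℝ, |μ l| ≤ C' * (1 + |l|) ^ N)
    (hM : ∀ a b : ℝ, a ≤ b → M (Ioc a b) = ENNReal.ofReal (μ b - μ a)) :
    TemperateMeasure M := by
  obtain ⟨C, N, h⟩ := hμ
  have hC : 0 ≤ C := by simpa using (abs_nonneg _).trans (h 0)
  obtain ⟨k, hk⟩ := exists_nat_ge N
  have h' : ∀ l, |μ l| ≤ C * (1 + |l|) ^ k := fun l => (h l).trans <| by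
    rw [← Real.rpow_natCast]; gcongr; simp
  refine ⟨k + 2, ?_⟩
  -- `(1+|t|)^{-(k+2)}` is at most the single term of this series with `n = ⌊|t|⌋`.
  have hle : ∀ t : ℝ, ENNReal.ofReal (((1 + |t|) ^ (k + 2))⁻¹) ≤
      ∑' n : ℕ, (Ioc (-((n : ℝ) + 1)) ((n : ℝ) + 1)).indicator
        (fun _ => ENNReal.ofReal ((((n : ℝ) + 1) ^ (k + 2))⁻¹)) t := by
    intro t
    refine le_trans ?_ (ENNReal.le_tsum ⌊|t|⌋₊)
    have h1 : |t| < (⌊|t|⌋₊ : ℝ) + 1 := Nat.lt_floor_add_one _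
    have h2 : (⌊|t|⌋₊ : ℝ) ≤ |t| := Nat.floor_le (abs_nonneg t)
    rw [indicator_of_mem (by
      rw [abs_lt] at h1
      exact ⟨h1.1, h1.2.le⟩)]
    apply ENNReal.ofReal_le_ofReal
    gcongr ?_⁻¹
    gcongr ?_ ^ _
    linarith
  refine ne_top_of_le_ne_top ?_ (lintegral_mono hle)
  rw [lintegral_tsum (fun n => (measurable_const.indicator measurableSet_Ioc).aemeasurable)]
  have hs : Summable fun n : ℕ => (2 * C * 2 ^ k) * (1 / ((n : ℝ) + 1) ^ 2) := by
    have := (summable_nat_add_iff 1).2 (Real.summable_one_div_nat_pow.2 (one_lt_two))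
    exact (by simpa using this : Summable fun n : ℕ => 1 / ((n : ℝ) + 1) ^ 2).mul_left _
  refine ne_top_of_le_ne_top hs.tsum_ofReal_ne_top (ENNReal.tsum_le_tsum fun n => ?_)
  rw [lintegral_indicator_const measurableSet_Ioc, hM _ _ (by linarith [(n.cast_nonneg : (0:ℝ) ≤ n)]),
    ← ENNReal.ofReal_mul (by positivity)]
  apply ENNReal.ofReal_le_ofReal
  have hn : (0 : ℝ) < (n : ℝ) + 1 := by positivity
  have a1 := h' ((n : ℝ) + 1)
  have a2 := h' (-((n : ℝ) + 1))
  rw [abs_neg] at a2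
  rw [abs_of_pos hn] at a1 a2
  have a3 : (1 + ((n : ℝ) + 1)) ^ k ≤ 2 ^ k * ((n : ℝ) + 1) ^ k := by
    rw [← mul_pow]; gcongr; linarith [(n.cast_nonneg : (0:ℝ) ≤ n)]
  have a4 : μ (n + 1) - μ (-(n + 1)) ≤ 2 * C * 2 ^ k * ((n : ℝ) + 1) ^ k := by
    have b1 := (le_abs_self _).trans a1
    have b2 := (neg_abs_le (μ (-((n : ℝ) + 1))))
    have b3 := mul_le_mul_of_nonneg_left a3 hC
    linarith
  calc _ ≤ (((n : ℝ) + 1) ^ (k + 2))⁻¹ * (2 * C * 2 ^ k * ((n : ℝ) + 1) ^ k) := by gcongr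
    _ = _ := by rw [pow_add]; field_simp

lemma TemperateMeasure.isLocallyFinite {M : Measure ℝ} (h : TemperateMeasure M) :
    IsLocallyFiniteMeasure M := by
  obtain ⟨k, hk⟩ := h
  refine ⟨fun x => ⟨Metric.ball 0 (|x| + 1), Metric.isOpen_ball.mem_nhds (by simp), ?_⟩⟩
  set ε := ENNReal.ofReal (((1 + (|x| + 1)) ^ k)⁻¹) with hε
  have h1 := meas_ge_le_lintegral_div (μ := M) (f := fun t => ENNReal.ofReal (((1 + |t|) ^ k)⁻¹))
    (by fun_prop) (ε := ε) (by rw [hε]; simp; positivity) (by simp [hε])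
  refine lt_of_le_of_lt (le_trans (measure_mono ?_) h1) ?_
  · intro t ht
    simp only [Metric.mem_ball, dist_zero_right, Real.norm_eq_abs] at ht
    simp only [mem_ofPred_eq, hε]
    apply ENNReal.ofReal_le_ofReal
    gcongr
  · exact ENNReal.div_lt_top hk (by rw [hε]; simp; positivity)

/-! ### Decay and tails of `φ` -/

lemma schwartz_decay (φ : SchwartzMap ℝ ℝ) (k : ℕ) :
    ∃ D : ℝ, 0 ≤ D ∧ ∀ x, |φ x| ≤ D * ((1 + |x|) ^ k)⁻¹ := by
  have h := fun x => SchwartzMap.one_add_le_sup_seminorm_apply (𝕜 := ℝ) (m := (k, 0)) (k := k)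
    (n := 0) le_rfl le_rfl φ x
  simp only [norm_iteratedFDeriv_zero, Real.norm_eq_abs] at h
  refine ⟨_, le_trans (by positivity) (h 0), fun x => ?_⟩
  rw [← div_eq_mul_inv, le_div_iff₀ (by positivity), mul_comm]
  exact h x

lemma schwartz_moment_le (φ : SchwartzMap ℝ ℝ) (r : ℝ) :
    ∃ D : ℝ, 0 ≤ D ∧ ∀ x, (1 + |x|) ^ r * |φ x| ≤ D * ((1 + |x|) ^ 2)⁻¹ := by
  obtain ⟨k, hk⟩ := exists_nat_ge r
  obtain ⟨D, hD, h⟩ := schwartz_decay φ (k + 2)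
  refine ⟨D, hD, fun x => ?_⟩
  have e : (1 + |x|) ^ r ≤ (1 + |x|) ^ k := by
    rw [← Real.rpow_natCast]; gcongr; simp
  calc _ ≤ (1 + |x|) ^ k * (D * ((1 + |x|) ^ (k + 2))⁻¹) := by gcongr; exact h x
    _ = _ := by rw [pow_add]; field_simp

lemma integrable_inv_sq : Integrable fun t : ℝ => ((1 + |t|) ^ 2)⁻¹ := by
  have := integrable_one_add_norm (E := ℝ) (μ := volume) (r := 2) (by simp)
  refine this.congr (ae_of_all _ fun t => ?_)
  simp only [Real.norm_eq_abs]
  rw [Real.rpow_neg (by positivity)]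
  norm_num

lemma schwartz_moment_integrable (φ : SchwartzMap ℝ ℝ) (r : ℝ) :
    Integrable fun x => (1 + |x|) ^ r * φ x := by
  obtain ⟨D, hD, h⟩ := schwartz_moment_le φ r
  have hc := φ.continuous.measurable
  refine (integrable_inv_sq.const_mul D).mono' (by fun_prop) (ae_of_all _ fun x => ?_)
  rw [Real.norm_eq_abs, abs_mul, abs_of_nonneg (by positivity)]
  exact h x

/-- Chebyshev's inequality for the tails of `φ`. -/
lemma schwartz_tail_le (φ : SchwartzMap ℝ ℝ) (hφpos : ∀ x, 0 < φ x) {r : ℝ} (hr : 0 ≤ r)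
    {S : Set ℝ} (hS : MeasurableSet S) {x : ℝ} (h : ∀ y ∈ S, |x| ≤ |y|) :
    ∫ y in S, φ y ≤ (∫ y, (1 + |y|) ^ r * φ y) * (1 + |x|) ^ (-r) := by
  have hi := schwartz_moment_integrable φ r
  have hnn : ∀ y, 0 ≤ (1 + |y|) ^ r * φ y := fun y => by have := hφpos y; positivity
  calc ∫ y in S, φ y ≤ ∫ y in S, (1 + |x|) ^ (-r) * ((1 + |y|) ^ r * φ y) := by
        refine setIntegral_mono_on φ.integrable.integrableOn (hi.const_mul _).integrableOn hS
          fun y hy => ?_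
        rw [← mul_assoc, Real.rpow_neg (by positivity), ← div_eq_inv_mul]
        refine le_mul_of_one_le_left (hφpos y).le ?_
        rw [one_le_div (by positivity)]
        exact Real.rpow_le_rpow (by positivity) (by linarith [h y hy]) hr
    _ ≤ ∫ y, (1 + |x|) ^ (-r) * ((1 + |y|) ^ r * φ y) :=
        setIntegral_le_integral (hi.const_mul _)
          (ae_of_all _ fun y => mul_nonneg (by positivity) (hnn y))
    _ = _ := by rw [integral_const_mul, mul_comm]

/-- The primitive of `φ` approximates the Heaviside function with rapidly decaying error. -/
lemma schwartz_primitive_sub_heaviside (φ : SchwartzMap ℝ ℝ) (hφpos : ∀ x, 0 < φ x)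
    (hφint : (∫ x : ℝ, φ x) = 1) {r : ℝ} (hr : 0 ≤ r) (x : ℝ) :
    |(∫ y in Iic x, φ y) - (if 0 ≤ x then 1 else 0)|
      ≤ (∫ y, (1 + |y|) ^ r * φ y) * (1 + |x|) ^ (-r) := by
  have hnn : ∀ S : Set ℝ, 0 ≤ ∫ y in S, φ y := fun S =>
    integral_nonneg fun y => (hφpos y).le
  split_ifs with hx
  · have h1 : (∫ y in Iic x, φ y) + ∫ y in Ioi x, φ y = 1 := by
      rw [← hφint, ← compl_Iic, integral_add_compl measurableSet_Iic φ.integrable]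
    rw [show (∫ y in Iic x, φ y) - 1 = -∫ y in Ioi x, φ y by linarith, abs_neg,
      abs_of_nonneg (hnn _)]
    refine schwartz_tail_le φ hφpos hr measurableSet_Ioi fun y hy => ?_
    rw [abs_of_nonneg hx]
    exact (le_of_lt hy).trans (le_abs_self y)
  · push Not at hx
    rw [sub_zero, abs_of_nonneg (hnn _)]
    refine schwartz_tail_le φ hφpos hr measurableSet_Iic fun y hy => ?_
    have hy' : y ≤ x := hy
    rw [abs_of_neg hx, abs_of_neg (hy'.trans_lt hx)]
    linarith

/-! ### Mollifying a measure -/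

/-- The signed indicator of the interval between `0` and `l`: its integral is the increment
from `0` to `l` of the distribution function. -/
noncomputable def signedInd (l t : ℝ) : ℝ := (if t ≤ l then 1 else 0) - (if t ≤ 0 then 1 else 0)

lemma signedInd_measurable (l : ℝ) : Measurable (signedInd l) := by
  unfold signedInd
  exact (Measurable.ite measurableSet_Iic measurable_const measurable_const).sub
    (Measurable.ite measurableSet_Iic measurable_const measurable_const)

lemma signedInd_of_nonneg {l : ℝ} (hl : 0 ≤ l) :
    signedInd l = (Ioc 0 l).indicator fun _ => 1 := by
  ext t
  simp only [signedInd, indicator, mem_Ioc]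
  split_ifs <;> grind

lemma signedInd_of_nonpos {l : ℝ} (hl : l ≤ 0) :
    signedInd l = (Ioc l 0).indicator fun _ => -1 := by
  ext t
  simp only [signedInd, indicator, mem_Ioc]
  split_ifs <;> grind

lemma integral_signedInd_of_nonneg (M : Measure ℝ) {l : ℝ} (hl : 0 ≤ l) :
    ∫ t, signedInd l t ∂M = (M (Ioc 0 l)).toReal := by
  rw [signedInd_of_nonneg hl, integral_indicator_const _ measurableSet_Ioc]
  simp [Measure.real]

lemma integral_signedInd_of_nonpos (M : Measure ℝ) {l : ℝ} (hl : l ≤ 0) :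
    ∫ t, signedInd l t ∂M = -(M (Ioc l 0)).toReal := by
  rw [signedInd_of_nonpos hl, integral_indicator_const _ measurableSet_Ioc]
  simp [Measure.real]

lemma signedInd_integrable (M : Measure ℝ) [IsLocallyFiniteMeasure M] (l : ℝ) :
    Integrable (signedInd l) M := by
  rcases le_total 0 l with hl | hl
  · rw [signedInd_of_nonneg hl]
    exact (integrable_indicator_iff measurableSet_Ioc).2 (integrableOn_const measure_Ioc_lt_top.ne)
  · rw [signedInd_of_nonpos hl]
    exact (integrable_indicator_iff measurableSet_Ioc).2 (integrableOn_const measure_Ioc_lt_top.ne)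

/-- Integrating the mollifier over `[0, l]` reproduces the signed indicator up to tails of `φ`
centred at the two endpoints. -/
lemma integral_mollifier_sub_signedInd (φ : SchwartzMap ℝ ℝ) (hφpos : ∀ x, 0 < φ x)
    (hφint : (∫ x : ℝ, φ x) = 1) {r : ℝ} (hr : 0 ≤ r) {σ : ℝ} (hσ : 0 < σ) (l t : ℝ) :
    |(∫ s in (0 : ℝ)..l, σ⁻¹ * φ ((s - t) / σ)) - signedInd l t|
      ≤ (∫ y, (1 + |y|) ^ r * φ y) *
        ((1 + |(l - t) / σ|) ^ (-r) + (1 + |(0 - t) / σ|) ^ (-r)) := by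
  have h1 : (∫ s in (0 : ℝ)..l, σ⁻¹ * φ ((s - t) / σ))
      = (∫ y in Iic ((l - t) / σ), φ y) - ∫ y in Iic ((0 - t) / σ), φ y := by
    rw [intervalIntegral.integral_Iic_sub_Iic φ.integrable.integrableOn φ.integrable.integrableOn,
      intervalIntegral.integral_const_mul]
    simp only [sub_div]
    rw [intervalIntegral.integral_comp_div_sub _ hσ.ne', smul_eq_mul, ← mul_assoc,
      inv_mul_cancel₀ hσ.ne', one_mul]
  have e : ∀ l : ℝ, (if 0 ≤ (l - t) / σ then (1 : ℝ) else 0) = if t ≤ l then 1 else 0 := by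
    intro l
    congr 1
    rw [le_div_iff₀ hσ, zero_mul, sub_nonneg]
  have a1 := schwartz_primitive_sub_heaviside φ hφpos hφint hr ((l - t) / σ)
  have a2 := schwartz_primitive_sub_heaviside φ hφpos hφint hr ((0 - t) / σ)
  rw [e] at a1 a2
  rw [h1, signedInd, mul_add]
  rw [abs_le] at *
  constructor <;> linarith [a1.1, a1.2, a2.1, a2.2]

/-- Decay of the mollifier in `t`, uniformly for `s` in a bounded interval. -/
lemma mollifier_bound (φ : SchwartzMap ℝ ℝ) (k : ℕ) {σ : ℝ} (hσ : 0 < σ) (L : ℝ) (hL : 0 ≤ L) :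
    ∃ D : ℝ, 0 ≤ D ∧ ∀ s t : ℝ, |s| ≤ L →
      |σ⁻¹ * φ ((s - t) / σ)| ≤ D * ((1 + |t|) ^ k)⁻¹ := by
  obtain ⟨D, hD, h⟩ := schwartz_decay φ k
  refine ⟨σ⁻¹ * D * ((1 + L) * (1 + σ)) ^ k, by positivity, fun s t hs => ?_⟩
  have hx : 1 + |t| ≤ (1 + L) * (1 + σ) * (1 + |(s - t) / σ|) := by
    rw [abs_div, abs_of_pos hσ]
    have h1 : |t| ≤ |s| + |s - t| := by
      have := abs_sub s (s - t)
      simpa using this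
    set u := |s - t| / σ with hu
    have h2 : |s - t| = σ * u := by rw [hu]; field_simp
    have hu0 : 0 ≤ u := by positivity
    rw [h2] at h1
    have : 1 + σ * u ≤ (1 + σ) * (1 + u) := by nlinarith
    have h3 : 1 + L + σ * u ≤ (1 + L) * (1 + σ * u) := by
      nlinarith [mul_nonneg hL (mul_nonneg hσ.le hu0)]
    nlinarith
  have hinv : ((1 + |(s - t) / σ|) ^ k)⁻¹ ≤ ((1 + L) * (1 + σ)) ^ k * ((1 + |t|) ^ k)⁻¹ := by
    rw [← div_eq_mul_inv, le_div_iff₀ (by positivity), ← div_eq_inv_mul,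
      div_le_iff₀ (by positivity), ← mul_pow]
    gcongr
  rw [abs_mul, abs_of_pos (inv_pos.2 hσ)]
  calc _ ≤ σ⁻¹ * (D * (((1 + L) * (1 + σ)) ^ k * ((1 + |t|) ^ k)⁻¹)) := by
        gcongr
        exact (h _).trans (by gcongr)
    _ = _ := by ring

lemma TemperateMeasure.integrable_mollifier {M : Measure ℝ} (hM : TemperateMeasure M)
    (φ : SchwartzMap ℝ ℝ) {σ : ℝ} (hσ : 0 < σ) (l : ℝ) :
    Integrable (fun t => σ⁻¹ * φ ((l - t) / σ)) M := by
  obtain ⟨k, hk⟩ := hM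
  obtain ⟨D, hD, h⟩ := mollifier_bound φ k hσ |l| (abs_nonneg l)
  have hi : Integrable (fun t : ℝ => ((1 + |t|) ^ k)⁻¹) M :=
    (lintegral_ofReal_ne_top_iff_integrable (by fun_prop)
      (ae_of_all _ fun t => by positivity)).1 hk
  have hc := φ.continuous
  exact (hi.const_mul D).mono' (by fun_prop) (ae_of_all _ fun t => h l t le_rfl)

lemma TemperateMeasure.integrable_prod_mollifier {M : Measure ℝ} [SFinite M]
    (hM : TemperateMeasure M) (φ : SchwartzMap ℝ ℝ) {σ : ℝ} (hσ : 0 < σ) (l : ℝ) :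
    Integrable (fun p : ℝ × ℝ => σ⁻¹ * φ ((p.1 - p.2) / σ))
      ((volume.restrict (uIoc 0 l)).prod M) := by
  obtain ⟨k, hk⟩ := hM
  obtain ⟨D, hD, h⟩ := mollifier_bound φ k hσ |l| (abs_nonneg l)
  have hi : Integrable (fun t : ℝ => ((1 + |t|) ^ k)⁻¹) M :=
    (lintegral_ofReal_ne_top_iff_integrable (by fun_prop)
      (ae_of_all _ fun t => by positivity)).1 hk
  have hc := φ.continuous
  have hfin : IsFiniteMeasure (volume.restrict (uIoc 0 l)) :=
    isFiniteMeasure_restrict.2 measure_Ioc_lt_top.ne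
  have hone : Integrable (fun _ : ℝ => (1 : ℝ)) (volume.restrict (uIoc 0 l)) :=
    integrable_const _
  have hp := (hone.mul_prod hi).const_mul D
  refine hp.mono' (by fun_prop) ?_
  have hmem : ∀ᵐ p ∂((volume.restrict (uIoc 0 l)).prod M), p.1 ∈ uIoc 0 l :=
    Measure.quasiMeasurePreserving_fst.ae (ae_restrict_mem measurableSet_uIoc)
  filter_upwards [hmem] with p hp
  simp only [one_mul]
  refine h p.1 p.2 ?_
  rcases mem_uIoc.1 hp with h | h
  · rw [abs_of_pos h.1]; exact h.2.trans (le_abs_self l)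
  · rw [abs_of_nonpos h.2, abs_of_neg (by linarith : l < 0)]; linarith

lemma TemperateMeasure.intervalIntegrable {M : Measure ℝ} [SFinite M]
    (hM : TemperateMeasure M) (φ : SchwartzMap ℝ ℝ) {σ : ℝ} (hσ : 0 < σ) (l : ℝ) :
    IntervalIntegrable (fun s => ∫ t, σ⁻¹ * φ ((s - t) / σ) ∂M) volume 0 l := by
  rw [intervalIntegrable_iff]
  exact (hM.integrable_prod_mollifier φ hσ l).integral_prod_left

/-- The primitive of the mollified measure differs from its distribution function by tail
integrals at the endpoints `0` and `l`. -/
lemma TemperateMeasure.primitive_sub_le {M : Measure ℝ} [IsLocallyFiniteMeasure M]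
    (hM : TemperateMeasure M) (φ : SchwartzMap ℝ ℝ) (hφpos : ∀ x, 0 < φ x)
    (hφint : (∫ x : ℝ, φ x) = 1) {r : ℝ} (hr : 0 ≤ r) {σ : ℝ} (hσ : 0 < σ) (l : ℝ) :
    ENNReal.ofReal |(∫ s in (0 : ℝ)..l, ∫ t, σ⁻¹ * φ ((s - t) / σ) ∂M) - ∫ t, signedInd l t ∂M|
      ≤ ENNReal.ofReal (∫ y, (1 + |y|) ^ r * φ y) *
        ((∫⁻ t, ENNReal.ofReal ((1 + |(l - t) / σ|) ^ (-r)) ∂M) +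
          ∫⁻ t, ENNReal.ofReal ((1 + |(0 - t) / σ|) ^ (-r)) ∂M) := by
  have hp := hM.integrable_prod_mollifier φ hσ l
  have hJ : 0 ≤ ∫ y, (1 + |y|) ^ r * φ y :=
    integral_nonneg fun y => mul_nonneg (by positivity) (hφpos y).le
  have hswap : (∫ s in (0 : ℝ)..l, ∫ t, σ⁻¹ * φ ((s - t) / σ) ∂M)
      = ∫ t, (∫ s in (0 : ℝ)..l, σ⁻¹ * φ ((s - t) / σ)) ∂M := by
    simp only [intervalIntegral.intervalIntegral_eq_integral_uIoc]
    rw [integral_smul, integral_integral_swap hp]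
  have hi : Integrable (fun t => ∫ s in (0 : ℝ)..l, σ⁻¹ * φ ((s - t) / σ)) M := by
    simp only [intervalIntegral.intervalIntegral_eq_integral_uIoc, smul_eq_mul]
    exact hp.integral_prod_right.const_mul _
  rw [hswap, ← integral_sub hi (signedInd_integrable M l), ← Real.norm_eq_abs, ofReal_norm]
  refine (enorm_integral_le_lintegral_enorm _).trans ?_
  rw [← lintegral_add_left (by fun_prop), ← lintegral_const_mul _ (by fun_prop)]
  refine lintegral_mono fun t => ?_
  rw [← ENNReal.ofReal_add (by positivity) (by positivity), ← ENNReal.ofReal_mul hJ,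
    ← ofReal_norm, Real.norm_eq_abs]
  exact ENNReal.ofReal_le_ofReal
    (integral_mollifier_sub_signedInd φ hφpos hφint hr hσ l t)

/-! ### Tail integrals of the monotone measure -/

/-- Since `φ` is bounded below near `0`, a slowly varying decaying kernel is dominated by its own
convolution with `φ`. -/
lemma exists_kernel_le_conv (φ : SchwartzMap ℝ ℝ) (hφpos : ∀ x, 0 < φ x) {r : ℝ} (hr : 0 ≤ r) :
    ∃ c : ℝ, 0 < c ∧ ∀ x : ℝ, ENNReal.ofReal c * ENNReal.ofReal ((1 + |x|) ^ (-r)) ≤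
      ∫⁻ y, ENNReal.ofReal ((1 + |y|) ^ (-r)) * ENNReal.ofReal (φ (x - y)) := by
  obtain ⟨x₀, -, hx₀⟩ := (isCompact_Icc (a := (-1 : ℝ)) (b := 1)).exists_isMinOn
    ⟨0, by simp⟩ φ.continuous.continuousOn
  have hp := hφpos x₀
  refine ⟨2 * 2 ^ (-r) * φ x₀, by positivity, fun x => ?_⟩
  calc ENNReal.ofReal (2 * 2 ^ (-r) * φ x₀) * ENNReal.ofReal ((1 + |x|) ^ (-r))
      = ∫⁻ _ in Icc (x - 1) (x + 1), ENNReal.ofReal ((2 * (1 + |x|)) ^ (-r) * φ x₀) := by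
        rw [setLIntegral_const, Real.volume_Icc, ← ENNReal.ofReal_mul (by positivity),
          ← ENNReal.ofReal_mul (by positivity), Real.mul_rpow (by positivity) (by positivity)]
        congr 1
        ring
    _ ≤ ∫⁻ y in Icc (x - 1) (x + 1),
          ENNReal.ofReal ((1 + |y|) ^ (-r)) * ENNReal.ofReal (φ (x - y)) := by
        refine setLIntegral_mono' measurableSet_Icc fun y hy => ?_
        rw [← ENNReal.ofReal_mul (by positivity)]
        apply ENNReal.ofReal_le_ofReal
        have h1 : φ x₀ ≤ φ (x - y) := hx₀ ⟨by linarith [hy.2], by linarith [hy.1]⟩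
        have h2 : |y| ≤ |x| + 1 := by
          rw [abs_le]
          constructor <;> linarith [hy.1, hy.2, le_abs_self x, neg_abs_le x]
        have h3 : (2 * (1 + |x|)) ^ (-r) ≤ (1 + |y|) ^ (-r) :=
          Real.rpow_le_rpow_of_nonpos (by positivity) (by linarith [abs_nonneg x]) (by linarith)
        gcongr
    _ ≤ _ := setLIntegral_le_lintegral _ _

/-- An upper bound for the mollified measure controls the tail integrals of the measure. -/
lemma lintegral_kernel_le (φ : SchwartzMap ℝ ℝ) {r : ℝ} {c : ℝ}
    (hc : ∀ x : ℝ, ENNReal.ofReal c * ENNReal.ofReal ((1 + |x|) ^ (-r)) ≤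
      ∫⁻ y, ENNReal.ofReal ((1 + |y|) ^ (-r)) * ENNReal.ofReal (φ (x - y)))
    {M : Measure ℝ} [SFinite M] {σ : ℝ} (hσ : 0 < σ) {G : ℝ → ENNReal}
    (hG : ∀ s, ∫⁻ t, ENNReal.ofReal (φ ((s - t) / σ)) ∂M ≤ G s) (l : ℝ) :
    ENNReal.ofReal c * ∫⁻ t, ENNReal.ofReal ((1 + |(l - t) / σ|) ^ (-r)) ∂M ≤
      ∫⁻ y, ENNReal.ofReal ((1 + |y|) ^ (-r)) * G (l - σ * y) := by
  have hcont := φ.continuous.measurable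
  calc ENNReal.ofReal c * ∫⁻ t, ENNReal.ofReal ((1 + |(l - t) / σ|) ^ (-r)) ∂M
      = ∫⁻ t, ENNReal.ofReal c * ENNReal.ofReal ((1 + |(l - t) / σ|) ^ (-r)) ∂M :=
        (lintegral_const_mul _ (by fun_prop)).symm
    _ ≤ ∫⁻ t, ∫⁻ y, ENNReal.ofReal ((1 + |y|) ^ (-r)) *
          ENNReal.ofReal (φ ((l - t) / σ - y)) ∂volume ∂M := lintegral_mono fun t => hc _
    _ = ∫⁻ y, ∫⁻ t, ENNReal.ofReal ((1 + |y|) ^ (-r)) *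
          ENNReal.ofReal (φ ((l - t) / σ - y)) ∂M :=
        lintegral_lintegral_swap (by
          refine Measurable.aemeasurable ?_
          simp only [Function.uncurry_def]
          fun_prop)
    _ ≤ _ := lintegral_mono fun y => by
        rw [lintegral_const_mul _ (by fun_prop)]
        refine mul_le_mul' le_rfl (le_trans (le_of_eq ?_) (hG (l - σ * y)))
        congr 1 with t
        congr 2
        field_simp
        ring

/-- A bound `B (1+|s|)^{-2}` is integrable, so primitives are `O(B)` uniformly. -/
lemma integral_inv_sq_le (B : ℝ) (hB : 0 ≤ B) {h : ℝ → ℝ}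
    (hh : ∀ s, |h s| ≤ B * (1 + |s|) ^ (-2 : ℝ)) (l : ℝ) :
    |∫ s in (0 : ℝ)..l, h s| ≤ B * ∫ s : ℝ, ((1 + |s|) ^ 2)⁻¹ := by
  have h2 : ∀ s : ℝ, B * (1 + |s|) ^ (-2 : ℝ) = B * ((1 + |s|) ^ 2)⁻¹ := fun s => by
    rw [Real.rpow_neg (by positivity)]; norm_num
  have hi := integrable_inv_sq.const_mul B
  rw [← integral_const_mul]
  calc |∫ s in (0 : ℝ)..l, h s| ≤ ∫ s in uIoc 0 l, |h s| := by
        simpa using intervalIntegral.norm_integral_le_integral_norm_uIoc (f := h) (a := 0) (b := l)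
          (μ := volume)
    _ ≤ ∫ s in uIoc 0 l, B * ((1 + |s|) ^ 2)⁻¹ := by
        refine integral_mono_of_nonneg (ae_of_all _ fun s => abs_nonneg _) hi.integrableOn
          (ae_of_all _ fun s => ?_)
        simp only
        rw [← h2]
        exact hh s
    _ ≤ _ := setIntegral_le_integral hi (ae_of_all _ fun s => by simp only [Pi.zero_apply]; positivity)

/-! ### The Tauberian estimate -/

/-- Hörmander's Tauberian lemma (Lemma 17.5.6): with `φ` a fixed positive
Schwartz function of integral one whose Fourier transform vanishes outside `[-1,1]`, and
`φ_σ(λ) = σ⁻¹ φ(λ/σ)`, if `μ` is nondecreasing temperate with `μ(0)=0` (with Stieltjes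
measure `μm`), `ν` has locally bounded variation, `ν(0)=0`, with Jordan decomposition
`νp - νn` whose total variation is bounded by `(A₀(1+|t|)^m + A₁(1+|t|)^{m-1}) dt`, and
`|((dμ - dν) ∗ φ_σ)(λ)| ≤ B(1+|λ|)^{-2}`, then
`|μ(λ) - ν(λ)| ≤ C_m (A₀σ(1+|λ|)^m + A₁σ(1+|λ|)^{m-1} + B)` with `C_m` depending only on
`m`, `σ₀` and `φ`. -/
theorem hormander_tauberian_lemma
    (m σ₀ : ℝ) (hm : 1 ≤ m) (hσ₀ : 0 < σ₀)
    (φ : SchwartzMap ℝ ℝ) (hφpos : ∀ x : ℝ, 0 < φ x)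
    (hφint : (∫ x : ℝ, φ x) = 1)
    (hφhat : ∀ t : ℝ, 1 < |t| → 𝓕 (fun x : ℝ => (φ x : ℂ)) t = 0) :
    ∃ C : ℝ, ∀ (μ ν : ℝ → ℝ) (μm νp νn : Measure ℝ) (A₀ A₁ B σ : ℝ),
      0 ≤ A₀ → 0 ≤ A₁ → 0 ≤ B → 0 < σ → σ ≤ σ₀ →
      Monotone μ → μ 0 = 0 →
      (∃ C' N : ℝ, ∀ l : ℝ, |μ l| ≤ C' * (1 + |l|) ^ N) →
      (∀ a b : ℝ, a ≤ b → μm (Ioc a b) = ENNReal.ofReal (μ b - μ a)) →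
      ν 0 = 0 →
      (∀ a b : ℝ, a ≤ b → ν b - ν a = (νp (Ioc a b)).toReal - (νn (Ioc a b)).toReal) →
      (νp + νn ≤ volume.withDensity
        (fun t : ℝ => ENNReal.ofReal (A₀ * (1 + |t|) ^ m + A₁ * (1 + |t|) ^ (m - 1)))) →
      (∀ l : ℝ,
        |(∫ t : ℝ, σ⁻¹ * φ ((l - t) / σ) ∂μm)
            - ((∫ t : ℝ, σ⁻¹ * φ ((l - t) / σ) ∂νp)
                - (∫ t : ℝ, σ⁻¹ * φ ((l - t) / σ) ∂νn))|
          ≤ B * (1 + |l|) ^ (-2 : ℝ)) →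
      ∀ l : ℝ, |μ l - ν l| ≤ C * (A₀ * σ * (1 + |l|) ^ m + A₁ * σ * (1 + |l|) ^ (m - 1) + B) := by
  -- The exponent is chosen so that `(1+|y|)^{-r} (1+|y|)^m` is integrable.
  set r : ℝ := m + 2 with hr_def
  have hr : 0 ≤ r := by linarith
  obtain ⟨c, hc0, hc⟩ := exists_kernel_le_conv φ hφpos hr
  have hφm := φ.continuous.measurable
  set J : ENNReal := ENNReal.ofReal (∫ y, (1 + |y|) ^ r * φ y) with hJ
  set S : ENNReal := ENNReal.ofReal (∫ s : ℝ, ((1 + |s|) ^ 2)⁻¹) with hS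
  set a : ENNReal := ∫⁻ y, ENNReal.ofReal (φ y) *
    ENNReal.ofReal ((1 + σ₀) ^ m * (1 + |y|) ^ m) with ha
  set b : ENNReal := ∫⁻ y, ENNReal.ofReal ((1 + |y|) ^ (-r)) *
    ENNReal.ofReal ((1 + σ₀) ^ m * (1 + |y|) ^ m) with hb
  have ha_top : a ≠ ⊤ := by
    have hi := (schwartz_moment_integrable φ m).const_mul ((1 + σ₀) ^ m)
    refine ne_top_of_le_ne_top hi.lintegral_lt_top.ne (lintegral_mono fun y => ?_)
    rw [← ENNReal.ofReal_mul (hφpos y).le]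
    apply ENNReal.ofReal_le_ofReal
    exact le_of_eq (by ring)
  have hb_top : b ≠ ⊤ := by
    have hi := integrable_inv_sq.const_mul ((1 + σ₀) ^ m)
    refine ne_top_of_le_ne_top hi.lintegral_lt_top.ne (lintegral_mono fun y => ?_)
    rw [← ENNReal.ofReal_mul (by positivity)]
    apply ENNReal.ofReal_le_ofReal
    refine le_of_eq ?_
    rw [mul_left_comm, ← Real.rpow_add (by positivity), hr_def,
      show -(m + 2) + m = -2 by ring, Real.rpow_neg (by positivity)]
    norm_num
  have hb_le : ∫⁻ y : ℝ, ENNReal.ofReal ((1 + |y|) ^ (-r)) ≤ b := by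
    refine lintegral_mono fun y => ?_
    refine le_mul_of_one_le_right' ?_
    rw [ENNReal.one_le_ofReal]
    exact one_le_mul_of_one_le_of_one_le
      (Real.one_le_rpow (by linarith) (by linarith))
      (Real.one_le_rpow (by simp) (by linarith))
  set K : ENNReal := (ENNReal.ofReal c)⁻¹ * (a * b + ENNReal.ofReal σ₀ * b) with hK
  have hK_top : K ≠ ⊤ := by
    refine ENNReal.mul_ne_top (ENNReal.inv_ne_top.2 (by simpa using hc0)) ?_
    exact ENNReal.add_ne_top.2 ⟨ENNReal.mul_ne_top ha_top hb_top,
      ENNReal.mul_ne_top ENNReal.ofReal_ne_top hb_top⟩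
  set T : ENNReal := S + J * (2 * K + 2 * b) with hT
  have hT_top : T ≠ ⊤ := by
    refine ENNReal.add_ne_top.2 ⟨ENNReal.ofReal_ne_top, ENNReal.mul_ne_top ENNReal.ofReal_ne_top
      (ENNReal.add_ne_top.2 ⟨ENNReal.mul_ne_top (by simp) hK_top,
        ENNReal.mul_ne_top (by simp) hb_top⟩)⟩
  refine ⟨T.toReal, ?_⟩
  intro μ ν μm νp νn A₀ A₁ B σ h₀ h₁ hB hσ hσσ hmono hμ0 hgrow hμm hν0 hν hνw hconv l
  change νp + νn ≤ volume.withDensity (fun t => ENNReal.ofReal (tauberWeight m A₀ A₁ t)) at hνw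
  have tμ := temperateMeasure_stieltjes hgrow hμm
  have tw := temperateMeasure_weight (m := m) h₀ h₁
  have tp : TemperateMeasure νp := 
    tw.mono ((Measure.le_iff'.2 fun s => by simp).trans hνw)
  have tn : TemperateMeasure νn := 
    tw.mono ((Measure.le_iff'.2 fun s => by simp).trans hνw)
  have lμ := tμ.isLocallyFinite
  have lp := tp.isLocallyFinite
  have ln := tn.isLocallyFinite
  have hw := tauberWeight_nonneg (m := m) h₀ h₁
  set E : Measure ℝ → ℝ → ENNReal :=
    fun M x => ∫⁻ t, ENNReal.ofReal ((1 + |(x - t) / σ|) ^ (-r)) ∂M with hE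
  set X : ENNReal := ENNReal.ofReal (σ * tauberWeight m A₀ A₁ l + B) with hX
  have hX1 : ∀ x, tauberWeight m A₀ A₁ x ≤ tauberWeight m A₀ A₁ l →
      ENNReal.ofReal (σ * tauberWeight m A₀ A₁ x) ≤ X := fun x hx => by
    apply ENNReal.ofReal_le_ofReal
    have := mul_le_mul_of_nonneg_left hx hσ.le
    linarith
  -- Tail integrals of `|dν|`.
  have hEν : ∀ x, tauberWeight m A₀ A₁ x ≤ tauberWeight m A₀ A₁ l →
      E νp x + E νn x ≤ X * b := fun x hx => by
    rw [hE]
    simp only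
    rw [← lintegral_add_measure]
    refine (lintegral_weight_le (f := fun y => ENNReal.ofReal ((1 + |y|) ^ (-r)))
      hm h₀ h₁ hσ hσσ hνw (by fun_prop) x).trans ?_
    exact mul_le_mul' (hX1 x hx) le_rfl
  -- The mollification of `dμ` is dominated by that of `|dν|` plus `B`.
  have hG : ∀ s, ∫⁻ t, ENNReal.ofReal (φ ((s - t) / σ)) ∂μm ≤
      ENNReal.ofReal (σ * tauberWeight m A₀ A₁ s) * a + ENNReal.ofReal (σ₀ * B) := fun s => by
    have hnn : ∀ M : Measure ℝ, 0 ≤ᵐ[M] fun t => σ⁻¹ * φ ((s - t) / σ) := fun M =>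
      ae_of_all _ fun t => by have := hφpos ((s - t) / σ); simp only [Pi.zero_apply]; positivity
    have hI : ∀ M : Measure ℝ, TemperateMeasure M →
        ∫⁻ t, ENNReal.ofReal (φ ((s - t) / σ)) ∂M =
          ENNReal.ofReal (σ * ∫ t, σ⁻¹ * φ ((s - t) / σ) ∂M) := fun M hM => by
      rw [ENNReal.ofReal_mul hσ.le, ofReal_integral_eq_lintegral_ofReal
        (hM.integrable_mollifier φ hσ s) (hnn M), ← lintegral_const_mul _ (by fun_prop)]
      congr 1 with t
      rw [← ENNReal.ofReal_mul hσ.le, mul_inv_cancel_left₀ hσ.ne']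
    have hν' : ∫⁻ t, ENNReal.ofReal (φ ((s - t) / σ)) ∂(νp + νn) ≤
        ENNReal.ofReal (σ * tauberWeight m A₀ A₁ s) * a :=
      lintegral_weight_le (f := fun y => ENNReal.ofReal (φ y)) hm h₀ h₁ hσ hσσ hνw
        (by fun_prop) s
    refine le_trans ?_ (add_le_add hν' le_rfl)
    have ip := integral_nonneg_of_ae (hnn νp)
    have iN := integral_nonneg_of_ae (hnn νn)
    rw [lintegral_add_measure, hI _ tμ, hI _ tp, hI _ tn,
      ← ENNReal.ofReal_add (by positivity) (by positivity),
      ← ENNReal.ofReal_add (by positivity) (by positivity)]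
    apply ENNReal.ofReal_le_ofReal
    have hB2 : B * (1 + |s|) ^ (-2 : ℝ) ≤ B :=
      mul_le_of_le_one_right hB (Real.rpow_le_one_of_one_le_of_nonpos (by simp) (by norm_num))
    have h3 := (le_abs_self _).trans ((hconv s).trans hB2)
    have h4 : σ * B ≤ σ₀ * B := by gcongr
    have h5 : (∫ t, σ⁻¹ * φ ((s - t) / σ) ∂μm) ≤ (∫ t, σ⁻¹ * φ ((s - t) / σ) ∂νp)
        + (∫ t, σ⁻¹ * φ ((s - t) / σ) ∂νn) + B := by linarith
    have h6 := mul_le_mul_of_nonneg_left h5 hσ.le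
    linarith
  -- Tail integrals of `dμ`.
  have hEμ : ∀ x, tauberWeight m A₀ A₁ x ≤ tauberWeight m A₀ A₁ l →
      E μm x ≤ X * K := fun x hx => by
    have h1 := lintegral_kernel_le φ hc hσ hG x
    have hmeas := tauberWeight_measurable m A₀ A₁
    have h2 : ∫⁻ y, ENNReal.ofReal ((1 + |y|) ^ (-r)) *
        (ENNReal.ofReal (σ * tauberWeight m A₀ A₁ (x - σ * y)) * a + ENNReal.ofReal (σ₀ * B))
        ≤ X * (a * b + ENNReal.ofReal σ₀ * b) := by
      calc _ ≤ ∫⁻ y, (X * a * (ENNReal.ofReal ((1 + |y|) ^ (-r)) *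
              ENNReal.ofReal ((1 + σ₀) ^ m * (1 + |y|) ^ m)) +
              ENNReal.ofReal (σ₀ * B) * ENNReal.ofReal ((1 + |y|) ^ (-r))) := by
            refine lintegral_mono fun y => ?_
            have e1 : ENNReal.ofReal (σ * tauberWeight m A₀ A₁ (x - σ * y)) ≤
                X * ENNReal.ofReal ((1 + σ₀) ^ m * (1 + |y|) ^ m) := by
              refine le_trans ?_ (mul_le_mul' (hX1 x hx) le_rfl)
              rw [← ENNReal.ofReal_mul (mul_nonneg hσ.le (hw x))]
              apply ENNReal.ofReal_le_ofReal
              have := mul_le_mul_of_nonneg_left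
                (tauberWeight_shift hm h₀ h₁ hσ hσσ x y) hσ.le
              linarith
            rw [mul_add]
            refine add_le_add ?_ (le_of_eq (mul_comm _ _))
            calc _ ≤ ENNReal.ofReal ((1 + |y|) ^ (-r)) *
                  (X * ENNReal.ofReal ((1 + σ₀) ^ m * (1 + |y|) ^ m) * a) := by gcongr
              _ = _ := by ring
        _ = X * a * b + ENNReal.ofReal (σ₀ * B) *
              ∫⁻ y : ℝ, ENNReal.ofReal ((1 + |y|) ^ (-r)) := by
            rw [lintegral_add_left (by fun_prop), lintegral_const_mul _ (by fun_prop),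
              lintegral_const_mul _ (by fun_prop)]
        _ ≤ X * a * b + ENNReal.ofReal σ₀ * X * b := by
            rw [ENNReal.ofReal_mul hσ₀.le]
            gcongr
            apply ENNReal.ofReal_le_ofReal
            have := mul_nonneg hσ.le (hw l)
            linarith
        _ = _ := by ring
    have h3 := h1.trans h2
    have hc' : ENNReal.ofReal c ≠ 0 := by simpa using hc0
    calc E μm x = (ENNReal.ofReal c)⁻¹ * (ENNReal.ofReal c * E μm x) := by
          rw [← mul_assoc, ENNReal.inv_mul_cancel hc' ENNReal.ofReal_ne_top, one_mul]
      _ ≤ (ENNReal.ofReal c)⁻¹ * (X * (a * b + ENNReal.ofReal σ₀ * b)) := by gcongr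
      _ = X * K := by rw [hK]; ring
  set P : Measure ℝ → ℝ := fun M => ∫ s in (0 : ℝ)..l, ∫ t, σ⁻¹ * φ ((s - t) / σ) ∂M with hP
  set Q : Measure ℝ → ℝ := fun M => ∫ t, signedInd l t ∂M with hQ
  have hD : ∀ M : Measure ℝ, IsLocallyFiniteMeasure M → TemperateMeasure M →
      ENNReal.ofReal |P M - Q M| ≤ J * (E M l + E M 0) := fun M _ hM =>
    hM.primitive_sub_le φ hφpos hφint hr hσ l
  have hPP : |P μm - (P νp - P νn)| ≤ B * ∫ s : ℝ, ((1 + |s|) ^ 2)⁻¹ := by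
    have := integral_inv_sq_le B hB hconv l
    rwa [intervalIntegral.integral_sub (tμ.intervalIntegrable φ hσ l)
      ((tp.intervalIntegrable φ hσ l).sub (tn.intervalIntegrable φ hσ l)),
      intervalIntegral.integral_sub (tp.intervalIntegrable φ hσ l)
      (tn.intervalIntegrable φ hσ l)] at this
  have hQQ : μ l - ν l = Q μm - (Q νp - Q νn) := by
    rcases le_total 0 l with hl | hl
    · have e1 := hν 0 l hl
      have e2 := hμm 0 l hl
      simp only [hQ, integral_signedInd_of_nonneg _ hl]
      rw [e2, ENNReal.toReal_ofReal (sub_nonneg.2 (hmono hl))]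
      linarith
    · have e1 := hν l 0 hl
      have e2 := hμm l 0 hl
      simp only [hQ, integral_signedInd_of_nonpos _ hl]
      rw [e2, ENNReal.toReal_ofReal (sub_nonneg.2 (hmono hl))]
      linarith
  have hl0 := tauberWeight_zero_le (m := m) hm h₀ h₁ l
  have hBX : ENNReal.ofReal B ≤ X := by
    apply ENNReal.ofReal_le_ofReal
    have := mul_nonneg hσ.le (hw l)
    linarith
  have hfin : ENNReal.ofReal |μ l - ν l| ≤ X * T := by
    have htri : |μ l - ν l| ≤ |P μm - (P νp - P νn)| + (|P μm - Q μm| + (|P νp - Q νp| +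
        |P νn - Q νn|)) := by
      rw [hQQ, abs_le]
      constructor <;>
      linarith [le_abs_self (P μm - (P νp - P νn)), neg_abs_le (P μm - (P νp - P νn)),
        le_abs_self (P μm - Q μm), neg_abs_le (P μm - Q μm), le_abs_self (P νp - Q νp),
        neg_abs_le (P νp - Q νp), le_abs_self (P νn - Q νn), neg_abs_le (P νn - Q νn)]
    calc ENNReal.ofReal |μ l - ν l|
        ≤ ENNReal.ofReal (B * ∫ s : ℝ, ((1 + |s|) ^ 2)⁻¹) + (ENNReal.ofReal |P μm - Q μm| +
          (ENNReal.ofReal |P νp - Q νp| + ENNReal.ofReal |P νn - Q νn|)) := by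
          rw [← ENNReal.ofReal_add (by positivity) (by positivity),
            ← ENNReal.ofReal_add (by positivity) (by positivity),
            ← ENNReal.ofReal_add ((abs_nonneg _).trans hPP) (by positivity)]
          exact ENNReal.ofReal_le_ofReal (htri.trans (by linarith))
      _ ≤ X * S + (J * (E μm l + E μm 0) + (J * (E νp l + E νp 0) + J * (E νn l + E νn 0))) := by
          rw [ENNReal.ofReal_mul hB]
          gcongr
          · exact hD _ lμ tμ
          · exact hD _ lp tp
          · exact hD _ ln tn
      _ = X * S + J * (E μm l + E μm 0 + (E νp l + E νn l) + (E νp 0 + E νn 0)) := by ring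
      _ ≤ X * S + J * (X * K + X * K + X * b + X * b) := by
          gcongr
          · exact hEμ l le_rfl
          · exact hEμ 0 hl0
          · exact hEν l le_rfl
          · exact hEν 0 hl0
      _ = X * T := by rw [hT]; ring
  have hXr : X = ENNReal.ofReal
      (A₀ * σ * (1 + |l|) ^ m + A₁ * σ * (1 + |l|) ^ (m - 1) + B) := by
    rw [hX, tauberWeight]
    congr 1
    ring
  rw [← ENNReal.ofReal_toReal hT_top, hXr, mul_comm,
    ← ENNReal.ofReal_mul ENNReal.toReal_nonneg] at hfin
  exact (ENNReal.ofReal_le_ofReal_iff (by positivity)).1 hfin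
end

section
/- Let m ≥ 1, δ > 0, and let g : ℝ → ℂ be a piecewise continuous (locally integrable) function satisfying |g(λ + s) − g(λ)| ≤ A₀(1+|λ|)^m + A₁(1+|λ|)^{m−1} for all λ ∈ ℝ and all 0 < s < 1. Suppose the Fourier transform of g, taken in the sense of tempered distributions, vanishes on the interval (−δ, δ); that is, ∫_ℝ g(λ)ψ(λ)dλ = 0 for every Schwartz function ψ on ℝ whose Fourier transform is supported in (−δ, δ). Then |g(λ)| ≤ C_{m,δ}(A₀(1+|λ|)^m + A₁(1+|λ|)^{m−1}) for all λ ∈ ℝ, where the constant C_{m,δ} depends only on m and δ. -/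
/-!
Fix one Schwartz function `ψ` with `∫ ψ = 1` whose Fourier transform is supported in `(-δ, δ)`.
Translating `ψ` only multiplies its Fourier transform by a phase, so every translate still
annihilates `g`, whence
`-g l = ∫ (g (t + l) - g l) * ψ t dt`.
Chaining increments of length `< 1` and using `1 + |l| + 2|t| ≤ (1 + |l|) * (1 + 2|t|)` gives
`‖g (l + t) - g l‖ ≤ (1 + 2|t|) ^ (⌈m⌉₊ + 1) * (A₀ (1 + |l|) ^ m + A₁ (1 + |l|) ^ (m - 1))`.
The rapid decay of `ψ` makes the polynomial weight integrable, and
`C = ∫ (1 + 2|t|) ^ (⌈m⌉₊ + 1) * ‖ψ t‖ dt` works. These are `exists_schwartz_fourier_support`,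
`fourier_translate_support`, `increment_bound` and `integrable_weight`.
-/

open MeasureTheory Set Filter
open scoped FourierTransform

/-- The inverse Fourier transform of a bump function at `0` whose value there is `1`. -/
lemma exists_schwartz_fourier_support (δ : ℝ) (hδ : 0 < δ) :
    ∃ ψ : SchwartzMap ℝ ℂ, Function.support (𝓕 (fun x : ℝ => ψ x)) ⊆ Ioo (-δ) δ ∧
      ∫ x, ψ x = 1 := by
  let b : ContDiffBump (0 : ℝ) := ⟨δ / 2, δ, by positivity, by linarith⟩
  have hc : HasCompactSupport (fun x => (b x : ℂ)) :=
    b.hasCompactSupport.comp_left (g := fun r : ℝ => (r : ℂ)) Complex.ofReal_zero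
  have hs : ContDiff ℝ (⊤ : ℕ∞) (fun x => (b x : ℂ)) :=
    Complex.ofRealCLM.contDiff.comp b.contDiff
  let f : SchwartzMap ℝ ℂ := hc.toSchwartzMap hs
  have hf : ∀ x, f x = (b x : ℂ) := fun x => rfl
  have key : 𝓕 (fun x : ℝ => (𝓕⁻ f : SchwartzMap ℝ ℂ) x) = fun x => f x := by
    have h : 𝓕 (𝓕⁻ f : SchwartzMap ℝ ℂ) = f := FourierTransform.fourier_fourierInv_eq f
    have h2 := congrArg (fun F : SchwartzMap ℝ ℂ => (F : ℝ → ℂ)) h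
    exact h2
  refine ⟨𝓕⁻ f, ?_, ?_⟩
  · rw [key]
    intro x hx
    have hx' : x ∈ Function.support b := by
      intro h0
      apply hx
      change f x = 0
      rw [hf, h0, Complex.ofReal_zero]
    rw [b.support_eq, Real.ball_eq_Ioo] at hx'
    simpa [b] using hx'
  · have h0 := congrFun key 0
    rw [Real.fourier_eq] at h0
    simp only [inner_zero_right, neg_zero, AddChar.map_zero_eq_one, one_smul] at h0
    rw [h0, hf, b.one_of_mem_closedBall (by simp [b.rIn_pos.le]), Complex.ofReal_one]

lemma fourier_translate_support (f : ℝ → ℂ) (l : ℝ) :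
    Function.support (𝓕 (fun x : ℝ => f (x - l))) ⊆ Function.support (𝓕 f) := by
  intro w hw h0
  apply hw
  have h := congrFun (VectorFourier.fourierIntegral_comp_add_right Real.fourierChar volume
    (innerₗ ℝ) f (-l)) w
  change 𝓕 (fun x : ℝ => f (x + -l)) w = _ • 𝓕 f w at h
  rw [h0, smul_zero] at h
  simpa only [sub_eq_add_neg] using h

lemma integrable_weight (ψ : SchwartzMap ℝ ℂ) (k : ℕ) :
    Integrable (fun t : ℝ => (1 + 2 * |t|) ^ k * ‖ψ t‖) := by
  have h1 : Integrable (fun t : ℝ => (2 : ℝ) ^ (k - 1) * (‖ψ t‖ + 2 ^ k * (‖t‖ ^ k * ‖ψ t‖))) :=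
    (ψ.integrable.norm.add ((ψ.integrable_pow_mul volume k).const_mul _)).const_mul _
  refine h1.mono' ?_ (ae_of_all _ fun t => ?_)
  · exact Continuous.aestronglyMeasurable (by fun_prop)
  · rw [Real.norm_of_nonneg (by positivity)]
    have := add_pow_le (zero_le_one' ℝ) (by positivity : (0 : ℝ) ≤ 2 * |t|) k
    calc (1 + 2 * |t|) ^ k * ‖ψ t‖ ≤ (2 ^ (k - 1) * (1 ^ k + (2 * |t|) ^ k)) * ‖ψ t‖ := by gcongr
      _ = _ := by rw [Real.norm_eq_abs, one_pow, mul_pow]; ring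

/-- Chaining `k` increments of the same length `s < 1`, for any nondecreasing bound `W (|l|)`. -/
lemma chain_bound (g : ℝ → ℂ) (W : ℝ → ℝ) (hW : MonotoneOn W (Ici 0))
    (h : ∀ l s : ℝ, 0 < s → s < 1 → ‖g (l + s) - g l‖ ≤ W |l|)
    (l s : ℝ) (hs : 0 < s) (hs1 : s < 1) (k : ℕ) :
    ‖g (l + k * s) - g l‖ ≤ k * W (|l| + k * s) := by
  induction k with
  | zero => simp
  | succ k ih =>
    have e : l + ((k + 1 : ℕ) : ℝ) * s = (l + k * s) + s := by push_cast; ring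
    have h1 := h (l + k * s) s hs hs1
    have hk : (0 : ℝ) ≤ k * s := by positivity
    have a1 : |l + k * s| ≤ |l| + k * s := by
      simpa [abs_of_nonneg hk] using abs_add_le l (k * s)
    have hle : |l| + k * s ≤ |l| + ((k + 1 : ℕ) : ℝ) * s := by push_cast; nlinarith
    have h0 : 0 ≤ |l| + k * s := by positivity
    have w1 : W |l + k * s| ≤ W (|l| + ((k + 1 : ℕ) : ℝ) * s) :=
      hW (mem_Ici.2 (abs_nonneg _)) (h0.trans hle) (a1.trans hle)
    have w2 : W (|l| + k * s) ≤ W (|l| + ((k + 1 : ℕ) : ℝ) * s) := hW h0 (h0.trans hle) hle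
    rw [e]
    calc ‖g (l + k * s + s) - g l‖
        ≤ ‖g (l + k * s + s) - g (l + k * s)‖ + ‖g (l + k * s) - g l‖ :=
          norm_sub_le_norm_sub_add_norm_sub _ _ _
      _ ≤ W (|l| + ((k + 1 : ℕ) : ℝ) * s) + k * W (|l| + ((k + 1 : ℕ) : ℝ) * s) := by
          gcongr
          · exact h1.trans w1
          · exact ih.trans (by gcongr)
      _ = _ := by push_cast; ring

lemma pos_increment_bound (g : ℝ → ℂ) (W : ℝ → ℝ) (hW : MonotoneOn W (Ici 0))
    (hW0 : ∀ x, 0 ≤ x → 0 ≤ W x)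
    (h : ∀ l s : ℝ, 0 < s → s < 1 → ‖g (l + s) - g l‖ ≤ W |l|)
    (l t : ℝ) (ht : 0 ≤ t) :
    ‖g (l + t) - g l‖ ≤ (t + 1) * W (|l| + t) := by
  have hw := hW0 (|l| + t) (by positivity)
  rcases ht.eq_or_lt with rfl | ht'
  · simpa using hw
  have hN : (0 : ℝ) < ((⌊t⌋₊ + 1 : ℕ) : ℝ) := by positivity
  have hlt : t < ((⌊t⌋₊ + 1 : ℕ) : ℝ) := by exact_mod_cast Nat.lt_floor_add_one t
  have := chain_bound g W hW h l (t / ((⌊t⌋₊ + 1 : ℕ) : ℝ)) (by positivity)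
    ((div_lt_one hN).2 hlt) (⌊t⌋₊ + 1)
  rw [mul_div_cancel₀ _ hN.ne'] at this
  refine this.trans (mul_le_mul_of_nonneg_right ?_ hw)
  push_cast
  linarith [Nat.floor_le ht]

/-- A negative `t` is handled by the positive case based at `l + t`; this is why `2 * |t|`
appears. -/
lemma abs_increment_bound (g : ℝ → ℂ) (W : ℝ → ℝ) (hW : MonotoneOn W (Ici 0))
    (hW0 : ∀ x, 0 ≤ x → 0 ≤ W x)
    (h : ∀ l s : ℝ, 0 < s → s < 1 → ‖g (l + s) - g l‖ ≤ W |l|) (l t : ℝ) :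
    ‖g (l + t) - g l‖ ≤ (|t| + 1) * W (|l| + 2 * |t|) := by
  have h0 : 0 ≤ |l| := abs_nonneg l
  have t0 : 0 ≤ |t| := abs_nonneg t
  rcases le_total 0 t with ht | ht
  · have := pos_increment_bound g W hW hW0 h l t ht
    rw [abs_of_nonneg ht] at *
    refine this.trans ?_
    gcongr
    exact hW (by simp only [mem_Ici]; linarith) (by simp only [mem_Ici]; linarith) (by linarith)
  · have := pos_increment_bound g W hW hW0 h (l + t) (-t) (by linarith)
    rw [add_neg_cancel_right, norm_sub_rev, ← abs_of_nonpos ht] at this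
    refine this.trans ?_
    gcongr
    have := abs_add_le l t
    have := abs_nonneg (l + t)
    exact hW (by simp only [mem_Ici]; linarith) (by simp only [mem_Ici]; linarith) (by linarith)

lemma increment_bound (m : ℝ) (hm : 1 ≤ m) (g : ℝ → ℂ) (A₀ A₁ : ℝ) (hA₀ : 0 ≤ A₀) (hA₁ : 0 ≤ A₁)
    (h : ∀ l s : ℝ, 0 < s → s < 1 →
        ‖g (l + s) - g l‖ ≤ A₀ * (1 + |l|) ^ m + A₁ * (1 + |l|) ^ (m - 1)) (l t : ℝ) :
    ‖g (l + t) - g l‖ ≤ (1 + 2 * |t|) ^ (⌈m⌉₊ + 1) *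
      (A₀ * (1 + |l|) ^ m + A₁ * (1 + |l|) ^ (m - 1)) := by
  have hm1 : 0 ≤ m - 1 := by linarith
  have hm0 : 0 ≤ m := by linarith
  have key := abs_increment_bound g (fun x => A₀ * (1 + x) ^ m + A₁ * (1 + x) ^ (m - 1))
    (by
      intro x hx y hy hxy
      simp only [mem_Ici] at hx hy
      dsimp only
      gcongr)
    (fun x hx => by positivity) h l t
  -- Since `m - 1 ≤ m ≤ ⌈m⌉₊`, both powers lose at most the factor `(1 + 2|t|) ^ ⌈m⌉₊`.
  have hp : ∀ p : ℝ, 0 ≤ p → p ≤ m →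
      (1 + (|l| + 2 * |t|)) ^ p ≤ (1 + 2 * |t|) ^ ⌈m⌉₊ * (1 + |l|) ^ p := by
    intro p hp0 hpm
    have hb : (1 : ℝ) ≤ 1 + 2 * |t| := by linarith [abs_nonneg t]
    calc (1 + (|l| + 2 * |t|)) ^ p ≤ ((1 + 2 * |t|) * (1 + |l|)) ^ p := by
          gcongr
          nlinarith [mul_nonneg (abs_nonneg t) (abs_nonneg l)]
      _ = (1 + 2 * |t|) ^ p * (1 + |l|) ^ p := Real.mul_rpow (by positivity) (by positivity)
      _ ≤ _ := by
          gcongr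
          rw [← Real.rpow_natCast]
          exact Real.rpow_le_rpow_of_exponent_le hb (hpm.trans (Nat.le_ceil m))
  refine key.trans ?_
  have t0 : 0 ≤ |t| := abs_nonneg t
  calc (|t| + 1) * (A₀ * (1 + (|l| + 2 * |t|)) ^ m + A₁ * (1 + (|l| + 2 * |t|)) ^ (m - 1))
      ≤ (1 + 2 * |t|) * (A₀ * ((1 + 2 * |t|) ^ ⌈m⌉₊ * (1 + |l|) ^ m) +
        A₁ * ((1 + 2 * |t|) ^ ⌈m⌉₊ * (1 + |l|) ^ (m - 1))) := by
        gcongr ?_ * (A₀ * ?_ + A₁ * ?_)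
        · linarith
        · exact hp m hm0 le_rfl
        · exact hp (m - 1) hm1 (by linarith)
    _ = _ := by ring

/-- Tauberian lemma of Hörmander–Avakumovič–Levitan: if `g` is locally integrable
with increments bounded by `A₀(1+|λ|)^m + A₁(1+|λ|)^{m-1}`, and its distributional Fourier
transform vanishes on `(-δ, δ)` (i.e. `∫ gψ = 0` whenever `𝓕ψ` is supported in `(-δ, δ)`),
then `|g(λ)| ≤ C_{m,δ}(A₀(1+|λ|)^m + A₁(1+|λ|)^{m-1})` with `C_{m,δ}` depending only on
`m` and `δ`. -/
theorem tauberian_gap_lemma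
    (m δ : ℝ) (hm : 1 ≤ m) (hδ : 0 < δ) :
    ∃ C : ℝ, ∀ (g : ℝ → ℂ) (A₀ A₁ : ℝ), 0 ≤ A₀ → 0 ≤ A₁ →
      LocallyIntegrable g volume →
      (∀ l s : ℝ, 0 < s → s < 1 →
        ‖g (l + s) - g l‖ ≤ A₀ * (1 + |l|) ^ m + A₁ * (1 + |l|) ^ (m - 1)) →
      (∀ ψ : SchwartzMap ℝ ℂ,
        Function.support (𝓕 (fun x : ℝ => ψ x)) ⊆ Ioo (-δ) δ →
        (∫ l : ℝ, g l * ψ l) = 0) →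
      ∀ l : ℝ, ‖g l‖ ≤ C * (A₀ * (1 + |l|) ^ m + A₁ * (1 + |l|) ^ (m - 1)) := by
  obtain ⟨ψ, hψs, hψ1⟩ := exists_schwartz_fourier_support δ hδ
  refine ⟨∫ t : ℝ, (1 + 2 * |t|) ^ (⌈m⌉₊ + 1) * ‖ψ t‖, ?_⟩
  intro g A₀ A₁ hA₀ hA₁ hg hinc hvan l
  set B : ℝ := A₀ * (1 + |l|) ^ m + A₁ * (1 + |l|) ^ (m - 1)
  have hb := fun t => increment_bound m hm g A₀ A₁ hA₀ hA₁ hinc l t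
  have hdom : Integrable (fun t : ℝ => (1 + 2 * |t|) ^ (⌈m⌉₊ + 1) * ‖ψ t‖ * B) :=
    (integrable_weight ψ _).mul_const _
  have hbound : ∀ t : ℝ, ‖(g (t + l) - g l) * ψ t‖ ≤
      (1 + 2 * |t|) ^ (⌈m⌉₊ + 1) * ‖ψ t‖ * B := by
    intro t
    rw [norm_mul, add_comm t l, mul_right_comm]
    gcongr
    exact hb t
  have hgm : AEStronglyMeasurable (fun t : ℝ => g (t + l)) volume :=
    hg.aestronglyMeasurable.comp_measurePreserving (measurePreserving_add_right volume l)
  have hint : Integrable (fun t : ℝ => (g (t + l) - g l) * ψ t) :=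
    hdom.mono' ((hgm.sub aestronglyMeasurable_const).mul ψ.continuous.aestronglyMeasurable)
      (ae_of_all _ hbound)
  have hzero : ∫ t : ℝ, g (t + l) * ψ t = 0 := by
    have h1 := hvan (ψ.compSubConstCLM ℂ l)
      ((fourier_translate_support (fun x => ψ x) l).trans hψs)
    rw [← integral_add_right_eq_self _ l] at h1
    simpa using h1
  have hrep : ∫ t : ℝ, (g (t + l) - g l) * ψ t = -g l := by
    have h2 : Integrable (fun t : ℝ => g l * ψ t) := ψ.integrable.const_mul _
    have h3 : ∫ t : ℝ, g (t + l) * ψ t =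
        (∫ t : ℝ, (g (t + l) - g l) * ψ t) + ∫ t : ℝ, g l * ψ t := by
      rw [← integral_add hint h2]
      congr 1 with t
      ring
    rw [hzero, integral_const_mul, hψ1, mul_one] at h3
    linear_combination -h3
  calc ‖g l‖ = ‖∫ t : ℝ, (g (t + l) - g l) * ψ t‖ := by rw [hrep, norm_neg]
    _ ≤ ∫ t : ℝ, (1 + 2 * |t|) ^ (⌈m⌉₊ + 1) * ‖ψ t‖ * B :=
        norm_integral_le_of_norm_le hdom (ae_of_all _ hbound)
    _ = _ := integral_mul_const _ _
end

section
/- Let f be a nonnegative upper semicontinuous function on O × S^{n−1}, where O ⊆ ℝⁿ is open and S^{n−1} carries its standard surface measure. Fix x₀ ∈ O and suppose the set {ξ ∈ S^{n−1} : f(x₀, ξ) ≠ 0} has surface measure zero. Then for every ε > 0 and δ > 0 there exist an open neighborhood N of x₀ in O and an open set Ω_b ⊆ S^{n−1} with surface measure |Ω_b| ≤ ε such that f(x, ξ) < δ for all (x, ξ) ∈ N × (S^{n−1} ∖ Ω_b). Furthermore, there is a smooth function b on S^{n−1} with 0 ≤ b ≤ 1, supported in Ω_b, such that, setting B = 1 −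 b, one has f(x, ξ) < δ for all x ∈ N and all ξ in the support of B. -/
/-!
The superlevel set `K = {ξ | δ ≤ f x₀ ξ}` is closed by upper semicontinuity, and it lies in the null
set `{ξ | f x₀ ξ ≠ 0}`. Outer regularity of the surface measure encloses that null set, hence `K`,
in an open `Ωb` of measure at most `ε`.
A smooth Urysohn function `b`, equal to `1` near `K` and to `0` near the complement of
`Ωb`, has support in `Ωb`, and the support of `1 - b` misses `K` while containing the complement
of `Ωb`. So `C = tsupport (1 - b)` is a compact set on which `f x₀ < δ`, and the tube lemma spreads
this inequality to a neighborhood of `x₀`, giving both claimed bounds at once.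
-/

open Set Metric MeasureTheory Manifold

/-- if `f ≥ 0` is upper semicontinuous on `O × S^{n-1}` and
`{ξ : f(x₀,ξ) ≠ 0}` has surface measure zero, then for every `ε, δ > 0` there are a
neighborhood `N` of `x₀` and an open `Ω_b ⊆ S^{n-1}` of measure `≤ ε` with `f < δ` on
`N × (S^{n-1} ∖ Ω_b)`, together with a smooth `b : S^{n-1} → [0,1]` supported in `Ω_b`
such that `f < δ` on `N × supp(1−b)`. -/
theorem small_loop_set_cutoff
    (n : ℕ) (hn : 1 ≤ n)
    [Fact (Module.finrank ℝ (EuclideanSpace ℝ (Fin n)) = n - 1 + 1)]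
    (O : Set (EuclideanSpace ℝ (Fin n))) (hO : IsOpen O)
    (f : EuclideanSpace ℝ (Fin n) → (sphere (0 : EuclideanSpace ℝ (Fin n)) 1) → ℝ)
    (hf_nonneg : ∀ x ξ, 0 ≤ f x ξ)
    (hf_usc : UpperSemicontinuousOn
      (fun p : EuclideanSpace ℝ (Fin n) × (sphere (0 : EuclideanSpace ℝ (Fin n)) 1) =>
        f p.1 p.2) (O ×ˢ univ))
    (x₀ : EuclideanSpace ℝ (Fin n)) (hx₀ : x₀ ∈ O)
    (hzero : (volume : Measure (EuclideanSpace ℝ (Fin n))).toSphere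
      {ξ : sphere (0 : EuclideanSpace ℝ (Fin n)) 1 | f x₀ ξ ≠ 0} = 0)
    (ε δ : ℝ) (hε : 0 < ε) (hδ : 0 < δ) :
    ∃ N : Set (EuclideanSpace ℝ (Fin n)), IsOpen N ∧ x₀ ∈ N ∧ N ⊆ O ∧
    ∃ Ωb : Set (sphere (0 : EuclideanSpace ℝ (Fin n)) 1), IsOpen Ωb ∧
      (volume : Measure (EuclideanSpace ℝ (Fin n))).toSphere Ωb ≤ ENNReal.ofReal ε ∧
      (∀ x ∈ N, ∀ ξ, ξ ∉ Ωb → f x ξ < δ) ∧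
      ∃ b : (sphere (0 : EuclideanSpace ℝ (Fin n)) 1) → ℝ,
        ContMDiff (𝓡 (n - 1)) (𝓘(ℝ, ℝ)) (⊤ : ℕ∞) b ∧
        (∀ ξ, 0 ≤ b ξ ∧ b ξ ≤ 1) ∧
        tsupport b ⊆ Ωb ∧
        (∀ x ∈ N, ∀ ξ ∈ tsupport (fun ξ => 1 - b ξ), f x ξ < δ) := by
  have hev : ∀ ξ, f x₀ ξ < δ → ∀ᶠ p : EuclideanSpace ℝ (Fin n) ×
      (sphere (0 : EuclideanSpace ℝ (Fin n)) 1) in nhds (x₀, ξ), f p.1 p.2 < δ := by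
    intro ξ hξ
    have h := hf_usc (x₀, ξ) ⟨hx₀, mem_univ _⟩ δ hξ
    rwa [(hO.prod isOpen_univ).nhdsWithin_eq ⟨hx₀, mem_univ _⟩] at h
  have hK : IsClosed {ξ | δ ≤ f x₀ ξ} := by
    rw [← isOpen_compl_iff, isOpen_iff_mem_nhds]
    intro ξ hξ
    have hc : Continuous fun ξ : sphere (0 : EuclideanSpace ℝ (Fin n)) 1 => (x₀, ξ) := by fun_prop
    filter_upwards [hc.continuousAt.eventually (hev ξ (not_le.1 hξ))] with η hη
    exact not_le.2 hη
  obtain ⟨U, hKU, hU, hUε⟩ := Set.exists_isOpen_lt_of_lt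
    (μ := (volume : Measure (EuclideanSpace ℝ (Fin n))).toSphere) _ (ENNReal.ofReal ε)
    (hzero ▸ ENNReal.ofReal_pos.2 hε)
  have hdisj : Disjoint Uᶜ {ξ | δ ≤ f x₀ ξ} :=
    disjoint_left.2 fun ξ hξ hξK => hξ (hKU (hδ.trans_le hξK).ne')
  obtain ⟨b, hb0, hb1, hb⟩ := exists_contMDiffMap_zero_one_nhds_of_isClosed (n := (⊤ : ℕ∞))
    (𝓡 (n - 1)) hU.isClosed_compl hK hdisj
  have hC : ∀ ξ ∈ tsupport (fun ξ => 1 - b ξ), f x₀ ξ < δ := by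
    intro ξ hξ
    by_contra h
    refine notMem_tsupport_iff_eventuallyEq.2 ?_ hξ
    filter_upwards [eventually_nhdsSet_iff_forall.1 hb1 ξ (not_lt.1 h)] with η hη
    simp [hη]
  have htube : ∀ᶠ x in nhds x₀, ∀ ξ ∈ tsupport (fun ξ => 1 - b ξ), f x ξ < δ :=
    (isClosed_tsupport _).isCompact.eventually_forall_of_forall_eventually
      fun ξ hξ => hev ξ (hC ξ hξ)
  obtain ⟨N, hN, hNo, hxN⟩ := _root_.eventually_nhds_iff.1 (htube.and (hO.mem_nhds hx₀))
  refine ⟨N, hNo, hxN, fun x hx => (hN x hx).2, U, hU, hUε.le, fun x hx ξ hξ => ?_,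
    b, b.contMDiff, hb, fun ξ hξ => ?_, fun x hx => (hN x hx).1⟩
  · refine (hN x hx).1 ξ (subset_tsupport _ ?_)
    simp [hb0.self_of_nhdsSet ξ hξ]
  · by_contra h
    exact notMem_tsupport_iff_eventuallyEq.2 (eventually_nhdsSet_iff_forall.1 hb0 ξ h) hξ
end

section
/- Let I ⊆ ℝ be an open interval, let f : I → ℝ be twice continuously differentiable, and let A, B ≥ 0 be constants such that |f''(x)| ≤ A|f'(x)| + B|f(x)| for all x ∈ I. If f vanishes identically on some nonempty open subinterval of I, then f vanishes identically on all of I. -/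
/-!
The vector `(f, f')` satisfies `‖(f, f')'‖ ≤ (1 + A + B) ‖(f, f')‖`, since `(f, f')' = (f', f'')`.
At a point of the subinterval where `f` vanishes, `f'` vanishes as well, so by Grönwall's
inequality `(f, f')` is zero to the right of that point. The hypotheses are invariant under the
reflection `x ↦ -x`, which gives the same to the left.
-/

/-- Grönwall's inequality for the pair `(f, g)`, where `g = f'` and `h = f''`: zero Cauchy data
at the left endpoint propagate to the right one. -/
lemma eq_zero_of_zero_cauchy_data {f g h : ℝ → ℝ} {A B a b : ℝ} (hA : 0 ≤ A) (hB : 0 ≤ B)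
    (hab : a ≤ b)
    (hf : ∀ x ∈ Set.Icc a b, HasDerivAt f (g x) x)
    (hg : ∀ x ∈ Set.Icc a b, HasDerivAt g (h x) x)
    (hh : ∀ x ∈ Set.Icc a b, |h x| ≤ A * |g x| + B * |f x|)
    (hfa : f a = 0) (hga : g a = 0) : f b = 0 := by
  have hd : ∀ x ∈ Set.Icc a b, HasDerivAt (fun y => (f y, g y)) (g x, h x) x :=
    fun x hx => (hf x hx).prodMk (hg x hx)
  have key := eq_zero_of_abs_deriv_le_mul_abs_self_of_eq_zero_right
    (f := fun y => (f y, g y)) (f' := fun y => (g y, h y)) (K := 1 + A + B) (a := a) (b := b)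
    (fun x hx => (hd x hx).continuousAt.continuousWithinAt)
    (fun x hx => (hd x (Set.Ico_subset_Icc_self hx)).hasDerivWithinAt)
    (by simp [hfa, hga]) (by
      intro x hx
      have h1 : |f x| ≤ ‖(f x, g x)‖ := norm_fst_le (f x, g x)
      have h2 : |g x| ≤ ‖(f x, g x)‖ := norm_snd_le (f x, g x)
      have h0 := norm_nonneg (f x, g x)
      have h3 := hh x (Set.Ico_subset_Icc_self hx)
      have h4 := mul_le_mul_of_nonneg_left h2 hA
      have h5 := mul_le_mul_of_nonneg_left h1 hB
      have h6 := mul_nonneg hA h0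
      have h7 := mul_nonneg hB h0
      refine norm_prod_le_iff.2 ⟨?_, ?_⟩
      · change |g x| ≤ _
        linarith
      · change |h x| ≤ _
        linarith)
  exact congrArg Prod.fst (key b (Set.right_mem_Icc.2 hab))

/-- one-dimensional unique continuation: if `f` is `C²` on an open interval `I`,
satisfies `|f''| ≤ A|f'| + B|f|` on `I`, and vanishes on a nonempty open subinterval,
then `f ≡ 0` on `I`. -/
theorem unique_continuation_one_dim
    (I : Set ℝ) (hIopen : IsOpen I) (hIconn : I.OrdConnected)
    (f : ℝ → ℝ) (hf : ContDiffOn ℝ 2 f I)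
    (A B : ℝ) (hA : 0 ≤ A) (hB : 0 ≤ B)
    (hineq : ∀ x ∈ I, |deriv (deriv f) x| ≤ A * |deriv f x| + B * |f x|)
    (hvanish : ∃ u v : ℝ, u < v ∧ Set.Ioo u v ⊆ I ∧ ∀ x ∈ Set.Ioo u v, f x = 0) :
    ∀ x ∈ I, f x = 0 := by
  obtain ⟨u, v, huv, hsub, h0⟩ := hvanish
  obtain ⟨c, hc⟩ := Set.nonempty_Ioo.2 huv
  have hcI := hsub hc
  have hf1 : ∀ x ∈ I, HasDerivAt f (deriv f x) x := fun x hx =>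
    ((hf.differentiableOn (by norm_num)).differentiableAt (hIopen.mem_nhds hx)).hasDerivAt
  have hf' : ContDiffOn ℝ 1 (deriv f) I :=
    hf.deriv_of_isOpen hIopen (by norm_num)
  have hf2 : ∀ x ∈ I, HasDerivAt (deriv f) (deriv (deriv f) x) x := fun x hx =>
    ((hf'.differentiableOn (by norm_num)).differentiableAt (hIopen.mem_nhds hx)).hasDerivAt
  have hc0 : f c = 0 := h0 c hc
  have hc1 : deriv f c = 0 := by
    have : f =ᶠ[nhds c] fun _ => (0 : ℝ) :=
      Filter.eventually_of_mem (isOpen_Ioo.mem_nhds hc) h0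
    rw [this.deriv_eq, deriv_const]
  intro x hx
  rcases le_total c x with hcx | hxc
  · have hI : Set.Icc c x ⊆ I := hIconn.out hcI hx
    exact eq_zero_of_zero_cauchy_data hA hB hcx (fun y hy => hf1 y (hI hy))
      (fun y hy => hf2 y (hI hy)) (fun y hy => hineq y (hI hy)) hc0 hc1
  · have hI : ∀ y ∈ Set.Icc (-c) (-x), -y ∈ I := fun y hy =>
      hIconn.out hx hcI ⟨by linarith [hy.2], by linarith [hy.1]⟩
    have key := eq_zero_of_zero_cauchy_data (f := fun y => f (-y)) (g := fun y => -deriv f (-y))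
      (h := fun y => deriv (deriv f) (-y)) hA hB (neg_le_neg hxc)
      (fun y hy => by
        have h := HasDerivAt.comp y (hf1 (-y) (hI y hy)) (hasDerivAt_neg y)
        rw [mul_neg_one] at h
        exact h)
      (fun y hy => by
        have h := (HasDerivAt.comp y (hf2 (-y) (hI y hy)) (hasDerivAt_neg y)).neg
        rw [mul_neg_one, neg_neg] at h
        exact h)
      (fun y hy => by simpa using hineq (-y) (hI y hy))
      (by simpa using hc0) (by simpa using hc1)
    simpa using key
end

section
/- Let [α, β] ⊆ ℝ be a compact interval, let a : [α, β] → ℝ be continuously differentiable with a(x) > 0 for all x, let K ∈ ℝ, and let g : [α, β] → ℝ be a function. Suppose ρ₁, ρ₂ : [α, β] → ℝ are twice continuously differentiable and both satisfy the equation ρ''(x) + (ρ'(x))² + (a'(x)/a(x))ρ'(x) − K a(x)^{−2} e^{−4ρ(x)} = g(x) for all x ∈ [α, β]. If ρ₁ = ρ₂ on some nonempty open subinterval of (α, β), then ρ₁ = ρ₂ on all of [α, β]. -/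
open Set

/-!
The difference `f = ρ₁ - ρ₂` satisfies a *linear* second-order equation. Subtracting the two Riccati
equations and factoring `(ρ₁')² - (ρ₂')²` gives
`f'' = -(ρ₁' + ρ₂' + a'/a) f' + K a⁻² q f`,
where `q` is the difference quotient of `r ↦ e^{-4r}` between `ρ₁` and `ρ₂`. By compactness the
coefficient of `f'` is bounded, and so is that of `f` by the Lipschitz estimate
`abs_exp_neg_sub_exp_neg_le`. Since `f` vanishes on an open interval, both `f` and `f'` vanish at
some interior point, and Grönwall uniqueness for the first-order system of `(f, f')`
(`eqOn_zero_of_linear_second_order`) gives `f = 0`.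
-/

/-- `r ↦ e^{-4r}` is Lipschitz on `[-R, R]` with constant `4 e^{4R}`. -/
lemma abs_exp_neg_sub_exp_neg_le {R r s : ℝ} (hr : |r| ≤ R) (hs : |s| ≤ R) :
    |Real.exp (-(4 * r)) - Real.exp (-(4 * s))| ≤ 4 * Real.exp (4 * R) * |r - s| := by
  wlog h : r ≤ s generalizing r s
  · rw [abs_sub_comm, abs_sub_comm r s]
    exact this hs hr (le_of_not_ge h)
  have h1 : Real.exp (-(4 * s)) ≤ Real.exp (-(4 * r)) := Real.exp_le_exp.2 (by linarith)
  have h2 : Real.exp (-(4 * r)) ≤ Real.exp (4 * R) :=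
    Real.exp_le_exp.2 (by linarith [(abs_le.1 hr).1])
  have h3 : Real.exp (-(4 * s)) = Real.exp (-(4 * r)) * Real.exp (-(4 * s) + 4 * r) := by
    rw [← Real.exp_add]
    ring_nf
  have h4 := Real.add_one_le_exp (-(4 * s) + 4 * r)
  rw [abs_of_nonneg (sub_nonneg.2 h1), abs_of_nonpos (sub_nonpos.2 h)]
  calc Real.exp (-(4 * r)) - Real.exp (-(4 * s))
      = Real.exp (-(4 * r)) * (1 - Real.exp (-(4 * s) + 4 * r)) := by rw [h3]; ring
    _ ≤ Real.exp (-(4 * r)) * (4 * (s - r)) := by gcongr; linarith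
    _ ≤ Real.exp (4 * R) * (4 * (s - r)) := by gcongr
    _ = 4 * Real.exp (4 * R) * -(r - s) := by ring

/-- One-dimensional unique continuation. The coefficients `c`, `d` need only be bounded: Grönwall
requires the vector field to be Lipschitz in the unknown, uniformly in time, and no regularity in
time. -/
lemma eqOn_zero_of_linear_second_order {α β t₀ A B : ℝ} {f f' c d : ℝ → ℝ}
    (ht₀ : t₀ ∈ Ioo α β)
    (hf : ContinuousOn f (Icc α β)) (hf' : ContinuousOn f' (Icc α β))
    (hc : ∀ t ∈ Ioo α β, |c t| ≤ A) (hd : ∀ t ∈ Ioo α β, |d t| ≤ B)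
    (h1 : ∀ t ∈ Ioo α β, HasDerivAt f (f' t) t)
    (h2 : ∀ t ∈ Ioo α β, HasDerivAt f' (c t * f' t + d t * f t) t)
    (h0 : f t₀ = 0) (h0' : f' t₀ = 0) :
    EqOn f 0 (Icc α β) := by
  have hA : 0 ≤ A := (abs_nonneg _).trans (hc t₀ ht₀)
  have hB : 0 ≤ B := (abs_nonneg _).trans (hd t₀ ht₀)
  let v : ℝ → ℝ × ℝ → ℝ × ℝ := fun t p => (p.2, c t * p.2 + d t * p.1)
  have hv : ∀ t ∈ Ioo α β, LipschitzOnWith (1 + A + B).toNNReal (v t) univ := by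
    intro t ht
    refine LipschitzOnWith.of_dist_le_mul fun p _ q _ => ?_
    rw [Real.coe_toNNReal _ (by positivity), dist_eq_norm, dist_eq_norm]
    have hp1 : |p.1 - q.1| ≤ ‖p - q‖ := norm_fst_le (p - q)
    have hp2 : |p.2 - q.2| ≤ ‖p - q‖ := norm_snd_le (p - q)
    have hn := norm_nonneg (p - q)
    refine norm_prod_le_iff.2 ⟨?_, ?_⟩
    · change |p.2 - q.2| ≤ _
      nlinarith [mul_nonneg hA hn, mul_nonneg hB hn]
    · change |(c t * p.2 + d t * p.1) - (c t * q.2 + d t * q.1)| ≤ _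
      calc |(c t * p.2 + d t * p.1) - (c t * q.2 + d t * q.1)|
          = |c t * (p.2 - q.2) + d t * (p.1 - q.1)| := by congr 1; ring
        _ ≤ |c t| * |p.2 - q.2| + |d t| * |p.1 - q.1| := by
            rw [← abs_mul, ← abs_mul]
            exact abs_add_le _ _
        _ ≤ A * ‖p - q‖ + B * ‖p - q‖ := by
            gcongr
            exacts [hc t ht, hd t ht]
        _ ≤ (1 + A + B) * ‖p - q‖ := by linarith
  have key : EqOn (fun t => (f t, f' t)) (fun _ => ((0 : ℝ), (0 : ℝ))) (Icc α β) := by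
    refine ODE_solution_unique_of_mem_Icc (v := v) (s := fun _ => univ) hv ht₀ (hf.prodMk hf')
      (fun t ht => (h1 t ht).prodMk (h2 t ht)) (fun _ _ => mem_univ _) continuousOn_const
      (fun t _ => ?_) (fun _ _ => mem_univ _) (by simp [h0, h0'])
    convert! hasDerivAt_const t ((0 : ℝ), (0 : ℝ)) using 1
    simp [v]
  exact fun t ht => congrArg Prod.fst (key ht)

/-- For a `C²` function on a compact interval, the one-sided derivatives `derivWithin` are genuine
two-sided derivatives at interior points, and the first one is continuous up to the endpoints. -/
lemma hasDerivAt_of_contDiffOn_two {α β : ℝ} (hαβ : α < β) {ρ : ℝ → ℝ}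
    (hρ : ContDiffOn ℝ 2 ρ (Icc α β)) :
    ContinuousOn (derivWithin ρ (Icc α β)) (Icc α β) ∧
      ∀ t ∈ Ioo α β, HasDerivAt ρ (derivWithin ρ (Icc α β) t) t ∧
        HasDerivAt (derivWithin ρ (Icc α β))
          (derivWithin (derivWithin ρ (Icc α β)) (Icc α β) t) t := by
  have hρ' : ContDiffOn ℝ 1 (derivWithin ρ (Icc α β)) (Icc α β) :=
    hρ.derivWithin (uniqueDiffOn_Icc hαβ) (by norm_num)
  refine ⟨hρ'.continuousOn, fun t ht => ?_⟩
  have hmem := Ioo_subset_Icc_self ht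
  have hnhds := Icc_mem_nhds ht.1 ht.2
  exact ⟨((hρ.differentiableOn (by norm_num) t hmem).hasDerivWithinAt).hasDerivAt hnhds,
    ((hρ'.differentiableOn (by norm_num) t hmem).hasDerivWithinAt).hasDerivAt hnhds⟩

/-- two solutions `ρ₁, ρ₂` on `[α, β]` of the Riccati-type equation
`ρ'' + (ρ')² + (a'/a)ρ' − K a⁻² e^{−4ρ} = g` which agree on a nonempty open subinterval of
`(α, β)` agree on all of `[α, β]`. -/
theorem riccati_unique_continuation
    (α β : ℝ) (hαβ : α < β)
    (a : ℝ → ℝ) (ha : ContDiffOn ℝ 1 a (Icc α β)) (hapos : ∀ x ∈ Icc α β, 0 < a x)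
    (K : ℝ) (g : ℝ → ℝ) (ρ₁ ρ₂ : ℝ → ℝ)
    (hρ₁ : ContDiffOn ℝ 2 ρ₁ (Icc α β)) (hρ₂ : ContDiffOn ℝ 2 ρ₂ (Icc α β))
    (hode₁ : ∀ x ∈ Icc α β,
      derivWithin (derivWithin ρ₁ (Icc α β)) (Icc α β) x
        + (derivWithin ρ₁ (Icc α β) x) ^ 2
        + (derivWithin a (Icc α β) x / a x) * derivWithin ρ₁ (Icc α β) x
        - K * (a x) ^ (-2 : ℤ) * Real.exp (-(4 * ρ₁ x)) = g x)
    (hode₂ : ∀ x ∈ Icc α β,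
      derivWithin (derivWithin ρ₂ (Icc α β)) (Icc α β) x
        + (derivWithin ρ₂ (Icc α β) x) ^ 2
        + (derivWithin a (Icc α β) x / a x) * derivWithin ρ₂ (Icc α β) x
        - K * (a x) ^ (-2 : ℤ) * Real.exp (-(4 * ρ₂ x)) = g x)
    (heq : ∃ u v : ℝ, u < v ∧ Ioo u v ⊆ Ioo α β ∧ EqOn ρ₁ ρ₂ (Ioo u v)) :
    EqOn ρ₁ ρ₂ (Icc α β) := by
  obtain ⟨u, v, huv, hsub, heq⟩ := heq
  obtain ⟨hp₁, hd₁⟩ := hasDerivAt_of_contDiffOn_two hαβ hρ₁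
  obtain ⟨hp₂, hd₂⟩ := hasDerivAt_of_contDiffOn_two hαβ hρ₂
  have ha' : ContinuousOn (derivWithin a (Icc α β)) (Icc α β) :=
    ha.continuousOn_derivWithin (uniqueDiffOn_Icc hαβ) le_rfl
  have ha0 : ∀ x ∈ Icc α β, a x ≠ 0 := fun x hx => (hapos x hx).ne'
  set p₁ := derivWithin ρ₁ (Icc α β)
  set p₂ := derivWithin ρ₂ (Icc α β)
  set b : ℝ → ℝ := fun x => derivWithin a (Icc α β) x / a x
  set w : ℝ → ℝ := fun x => K * (a x) ^ (-2 : ℤ)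
  have hb : ContinuousOn b (Icc α β) := ha'.div ha.continuousOn ha0
  have hw : ContinuousOn w (Icc α β) :=
    continuousOn_const.mul (ha.continuousOn.zpow₀ _ fun x hx => Or.inl (ha0 x hx))
  obtain ⟨A, hA⟩ := isCompact_Icc.exists_bound_of_continuousOn ((hp₁.add hp₂).add hb).neg
  obtain ⟨W, hW⟩ := isCompact_Icc.exists_bound_of_continuousOn hw
  obtain ⟨R₁, hR₁⟩ := isCompact_Icc.exists_bound_of_continuousOn hρ₁.continuousOn
  obtain ⟨R₂, hR₂⟩ := isCompact_Icc.exists_bound_of_continuousOn hρ₂.continuousOn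
  -- Where `ρ₁ t = ρ₂ t` the quotient is `0` by the division convention, which is harmless since
  -- it only ever appears multiplied by `ρ₁ t - ρ₂ t`.
  set q : ℝ → ℝ := fun t =>
    (Real.exp (-(4 * ρ₁ t)) - Real.exp (-(4 * ρ₂ t))) / (ρ₁ t - ρ₂ t) with hq
  have hq_mul : ∀ t, q t * (ρ₁ t - ρ₂ t) = Real.exp (-(4 * ρ₁ t)) - Real.exp (-(4 * ρ₂ t)) := by
    intro t
    refine div_mul_cancel_of_imp fun h => ?_
    rw [sub_eq_zero.1 h, sub_self]
  have hq_le : ∀ t ∈ Icc α β, |q t| ≤ 4 * Real.exp (4 * max R₁ R₂) := by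
    intro t ht
    rw [hq, abs_div]
    exact div_le_of_le_mul₀ (abs_nonneg _) (by positivity) (abs_exp_neg_sub_exp_neg_le
      ((hR₁ t ht).trans (le_max_left _ _)) ((hR₂ t ht).trans (le_max_right _ _)))
  have hmid : (u + v) / 2 ∈ Ioo u v := ⟨by linarith, by linarith⟩
  have hmid' := hsub hmid
  have hp_eq : p₁ ((u + v) / 2) = p₂ ((u + v) / 2) :=
    (hd₁ _ hmid').1.unique ((hd₂ _ hmid').1.congr_of_eventuallyEq
      (heq.eventuallyEq_of_mem (Ioo_mem_nhds hmid.1 hmid.2)))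
  have key : EqOn (fun t => ρ₁ t - ρ₂ t) 0 (Icc α β) := by
    refine eqOn_zero_of_linear_second_order (f' := fun t => p₁ t - p₂ t)
      (c := fun t => -(p₁ t + p₂ t + b t)) (d := fun t => w t * q t)
      (A := A) (B := W * (4 * Real.exp (4 * max R₁ R₂))) hmid'
      (hρ₁.continuousOn.sub hρ₂.continuousOn) (hp₁.sub hp₂)
      (fun t ht => hA t (Ioo_subset_Icc_self ht)) (fun t ht => ?_)
      (fun t ht => (hd₁ t ht).1.sub (hd₂ t ht).1) (fun t ht => ?_)
      (sub_eq_zero.2 (heq hmid)) (sub_eq_zero.2 hp_eq)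
    · have ht' := Ioo_subset_Icc_self ht
      rw [abs_mul]
      exact mul_le_mul (hW t ht') (hq_le t ht') (abs_nonneg _)
        ((norm_nonneg _).trans (hW t ht'))
    · have ht' := Ioo_subset_Icc_self ht
      convert! (hd₁ t ht).2.sub (hd₂ t ht).2 using 1
      linear_combination hode₂ t ht' - hode₁ t ht' + w t * hq_mul t
  exact fun t ht => sub_eq_zero.1 (key ht)
end
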